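/- arXiv:1703.10115 — 4 statements merged into one kernel-verified Lean document; each statement's English description precedes it below -/
import Mathlib

section
/- Let φ(τ,z) be a weakly holomorphic Jacobi form of even weight k and index m. Then the function φ̃(τ) := τ^{-k} Σ_{ℓ=0}^{m-1} φ(-1/(mτ), ℓ/m) is a weakly holomorphic modular form of weight k on Γ₀(m); that is, φ̃ is holomorphic on ℍ, satisfies φ̃((aτ+b)/(cτ+d)) = (cτ+d)^k φ̃(τ) for all [[a,b],[c,d]] ∈ Γ₀(m), and is meromorphic at the cusps of Γ₀(m). -/
open Complex Matrix

noncomputable section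

/-- `SL(2, ℝ)`. -/
abbrev SL2R := Matrix.SpecialLinearGroup (Fin 2) ℝ

/-- `q = e^{2πiz}` (also used as `ζ = e^{2πiz}`). -/
def qc (z : ℂ) : ℂ := Complex.exp (2 * Real.pi * Complex.I * z)

/-- The Dedekind eta function `η(z) = q^{1/24} ∏_{n ≥ 1} (1 - q^n)` (intended for `Im z > 0`). -/
def dedekindEta (z : ℂ) : ℂ :=
  Complex.exp (Real.pi * Complex.I * z / 12) *
    ∏' n : ℕ, (1 - Complex.exp (2 * Real.pi * Complex.I * ((n : ℂ) + 1) * z))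

/-- The hauptmodul `j_N` of `Γ₀(N)` for `N ∈ {2, 3, 5, 7, 13, 6, 10}`. -/
def jn (N : ℕ) (z : ℂ) : ℂ :=
  if N = 6 then (dedekindEta (2 * z) * dedekindEta (3 * z) ^ 3 / (dedekindEta z * dedekindEta (6 * z) ^ 3)) ^ 3 - 3
  else if N = 10 then dedekindEta (2 * z) * dedekindEta (5 * z) ^ 5 / (dedekindEta z * dedekindEta (10 * z) ^ 5) - 1
  else (dedekindEta z / dedekindEta ((N : ℂ) * z)) ^ (24 / (N - 1)) + 24 / ((N : ℂ) - 1)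

/-- The hauptmodul `j_N^*` of the Fricke group `Γ₀^*(N)` for `N ∈ {2, 3, 5, 7, 13, 6, 10}`. -/
def jnStar (N : ℕ) (z : ℂ) : ℂ :=
  if N = 6 then
    (dedekindEta z * dedekindEta (3 * z) / (dedekindEta (2 * z) * dedekindEta (6 * z))) ^ 6 + 6 +
      2 ^ 6 * (dedekindEta (2 * z) * dedekindEta (6 * z) / (dedekindEta z * dedekindEta (3 * z))) ^ 6
  else if N = 10 then
    (dedekindEta z * dedekindEta (5 * z) / (dedekindEta (2 * z) * dedekindEta (10 * z))) ^ 4 + 4 +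
      2 ^ 4 * (dedekindEta (2 * z) * dedekindEta (10 * z) / (dedekindEta z * dedekindEta (5 * z))) ^ 4
  else
    (dedekindEta z / dedekindEta ((N : ℂ) * z)) ^ (24 / (N - 1)) + 24 / ((N : ℂ) - 1) +
      (N : ℂ) ^ (12 / (N - 1)) * (dedekindEta ((N : ℂ) * z) / dedekindEta z) ^ (24 / (N - 1))

/-- `f` has the `q`-expansion `f(τ) = Σ_{n ≥ n₀} (a n) q^n` on the upper half-plane. -/
def HasQExp (f : ℂ → ℂ) (a : ℤ → ℂ) (n₀ : ℤ) : Prop :=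
  (∀ n < n₀, a n = 0) ∧
    ∀ τ : ℂ, 0 < τ.im →
      HasSum (fun m : ℕ => a (n₀ + m) * qc τ ^ (n₀ + (m : ℤ))) (f τ)

/-- `Γ₀(N)` viewed as a subgroup of `SL(2, ℝ)`. -/
def Gamma0SL2R (N : ℕ) : Subgroup SL2R :=
  (CongruenceSubgroup.Gamma0 N).map
    (Matrix.SpecialLinearGroup.map (Int.castRingHom ℝ))

/-- The set of Atkin–Lehner matrices `W_e` of level `N`:
`W_e = e^{-1/2} [[xe, y], [zN, we]]`, `x, y, z, w ∈ ℤ` (determinant `1` being automatic). -/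
def atkinLehnerSet (N e : ℕ) : Set SL2R :=
  { g | ∃ x y z w : ℤ,
      g.1 = (Real.sqrt e)⁻¹ • !![(x : ℝ) * e, (y : ℝ); (z : ℝ) * N, (w : ℝ) * e] }

/-- The Fricke group `Γ₀^*(N)`, generated by `Γ₀(N)` and all Atkin–Lehner involutions `W_e`
for `e ∣ N` with `gcd(e, N/e) = 1`. -/
def FrickeGroup (N : ℕ) : Subgroup SL2R :=
  Subgroup.closure
    ((Gamma0SL2R N : Set SL2R) ∪
      ⋃ e ∈ {e : ℕ | e ∣ N ∧ Nat.Coprime e (N / e)}, atkinLehnerSet N e)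

/-- The Gram matrix of the integral binary quadratic form `[a, b, c]`. -/
def formMat (a b c : ℤ) : Matrix (Fin 2) (Fin 2) ℝ :=
  !![(a : ℝ), (b : ℝ) / 2; (b : ℝ) / 2, (c : ℝ)]

/-- `𝒬_{d,N}`: positive definite integral binary quadratic forms `[a, b, c]` of
discriminant `-d` with `N ∣ a`. -/
def QdN (d : ℤ) (N : ℕ) : Set (Matrix (Fin 2) (Fin 2) ℝ) :=
  { M | ∃ a b c : ℤ, M = formMat a b c ∧ 0 < a ∧ b ^ 2 - 4 * a * c = -d ∧ (N : ℤ) ∣ a }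

/-- `𝒬_{d,N,h}`: members of `𝒬_{d,N}` with `b ≡ h (mod 2N)`. -/
def QdNh (d : ℤ) (N : ℕ) (h : ℤ) : Set (Matrix (Fin 2) (Fin 2) ℝ) :=
  { M | ∃ a b c : ℤ, M = formMat a b c ∧ 0 < a ∧ b ^ 2 - 4 * a * c = -d ∧ (N : ℤ) ∣ a ∧
      (b : ZMod (2 * N)) = (h : ZMod (2 * N)) }

/-- Orbit relation of the (right) action `Q ↦ Q ∘ g`, i.e. `M ↦ gᵀ M g`, of `Γ ≤ SL(2, ℝ)`
on a set `S` of Gram matrices of quadratic forms. -/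
def formRel (Γ : Subgroup SL2R) (S : Set (Matrix (Fin 2) (Fin 2) ℝ)) (Q Q' : S) : Prop :=
  ∃ g ∈ Γ, Q'.1 = (g.1)ᵀ * Q.1 * g.1

/-- The CM point `α_Q` of a positive definite form (as a point of `ℂ`; it lies in the upper
half-plane): `α_Q = (-b + i √d) / (2a) = (-(b/2) + i √(det M)) / a`. -/
def cmPointC (M : Matrix (Fin 2) (Fin 2) ℝ) : ℂ :=
  ((-(M 0 1) : ℝ) + Complex.I * Real.sqrt M.det) / ((M 0 0 : ℝ) : ℂ)

/-- The order of the stabilizer of the form `M` in `Γ/{±1}` (the stabilizer in `Γ` contains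
`±1` and has twice the cardinality). -/
def stabOrder (Γ : Subgroup SL2R) (M : Matrix (Fin 2) (Fin 2) ℝ) : ℕ :=
  Nat.card { g : SL2R // g ∈ Γ ∧ (g.1)ᵀ * M * g.1 = M } / 2

/-- The modular trace `Σ_{Q ∈ S/Γ} f(α_Q) / |Γ̄_Q|`. -/
def classTrace (Γ : Subgroup SL2R) (f : ℂ → ℂ)
    (S : Set (Matrix (Fin 2) (Fin 2) ℝ)) : ℂ :=
  ∑ᶠ O : Quot (formRel Γ S),
    f (cmPointC (Quot.out O).1) / (stabOrder Γ (Quot.out O).1 : ℂ)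

/-- `t₂^{(N*)}(d)`, where `P` is the polynomial with `φ₂(j_N^*) = P(j_N^*)`;
includes the paper's conventions at nonpositive indices. -/
def t2Star (N : ℕ) (P : Polynomial ℂ) (d : ℤ) : ℂ :=
  if 0 < d then
    classTrace (FrickeGroup N) (fun z => Polynomial.eval (jnStar N z) P) (QdN d N)
  else if d = 0 then (if N = 2 then 5 else if N = 6 ∨ N = 10 then 5 / 2 else 3)
  else if d = -1 then -1
  else if d = -4 then -2
  else 0

/-- `σ₁^{(N)}(x) = Σ_{d ∣ x, N ∤ d} d` for `x ∈ ℤ_{>0}`, `(N-1)/24` at `x = 0`, and `0`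
off `ℤ_{≥0}`. -/
def sigmaN (N : ℕ) (x : ℚ) : ℂ :=
  if x = 0 then ((N : ℂ) - 1) / 24
  else if 0 < x ∧ x.den = 1 then
    ∑ d ∈ (Nat.divisors x.num.toNat).filter (fun d => ¬ N ∣ d), (d : ℂ)
  else 0

/-- `σ₁(x) = Σ_{d ∣ x} d` for `x ∈ ℤ_{>0}` and `0` otherwise. -/
def sigmaQ (x : ℚ) : ℂ :=
  if 0 < x ∧ x.den = 1 then ∑ d ∈ Nat.divisors x.num.toNat, (d : ℂ) else 0

/-- A weakly holomorphic Jacobi form of weight `k` and index `m`. -/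
structure WeakJacobiForm (k : ℤ) (m : ℕ) where
  toFun : ℂ → ℂ → ℂ
  holo : DifferentiableOn ℂ (fun p : ℂ × ℂ => toFun p.1 p.2)
      ({τ : ℂ | 0 < τ.im} ×ˢ (Set.univ : Set ℂ))
  slash_inv : ∀ a b c d : ℤ, a * d - b * c = 1 → ∀ τ z : ℂ, 0 < τ.im →
    ((c : ℂ) * τ + d) ^ (-k) *
        Complex.exp (-(2 * Real.pi * Complex.I * m * c * z ^ 2) / ((c : ℂ) * τ + d)) *
        toFun (((a : ℂ) * τ + b) / ((c : ℂ) * τ + d)) (z / ((c : ℂ) * τ + d)) =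
      toFun τ z
  elliptic : ∀ lm mu : ℤ, ∀ τ z : ℂ, 0 < τ.im →
    Complex.exp (2 * Real.pi * Complex.I * m * ((lm : ℂ) ^ 2 * τ + 2 * lm * z)) *
        toFun τ (z + lm * τ + mu) = toFun τ z
  coeff : ℤ → ℤ → ℂ
  coeff_neg_finite : {n : ℤ | n < 0 ∧ ∃ r : ℤ, coeff n r ≠ 0}.Finite
  expansion : ∀ τ z : ℂ, 0 < τ.im →
    HasSum (fun p : ℤ × ℤ => coeff p.1 p.2 * qc τ ^ p.1 * qc z ^ p.2) (toFun τ z)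

/-- Meromorphy of weight `k` at all cusps: at each cusp `γ∞`, the function `F|_k γ` has a
Fourier expansion in fractional powers of `q` with only finitely many negative terms. -/
def MeromAtCusps (k : ℤ) (F : ℂ → ℂ) : Prop :=
  ∀ a b c d : ℤ, a * d - b * c = 1 →
    ∃ (M : ℕ) (cs : ℤ → ℂ) (n₀ : ℤ), 0 < M ∧
      ∀ τ : ℂ, 0 < τ.im →
        HasSum
          (fun j : ℕ => cs (n₀ + j) *
            Complex.exp (2 * Real.pi * Complex.I * τ / M) ^ (n₀ + (j : ℤ)))
          (((c : ℂ) * τ + d) ^ (-k) * F (((a : ℂ) * τ + b) / ((c : ℂ) * τ + d)))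

/-- The Möbius action of an element of `SL(2, ℝ)` on `ℂ`. -/
def moebius (g : SL2R) (z : ℂ) : ℂ :=
  ((g.1 0 0 : ℝ) * z + ((g.1 0 1 : ℝ) : ℂ)) / ((g.1 1 0 : ℝ) * z + ((g.1 1 1 : ℝ) : ℂ))

/-- A weakly holomorphic modular function on `Γ`: holomorphic on the upper half-plane,
`Γ`-invariant, with poles only at the cusps. -/
def IsWeaklyHolModularFn (Γ : Subgroup SL2R) (f : ℂ → ℂ) : Prop :=
  DifferentiableOn ℂ f {z : ℂ | 0 < z.im} ∧
    (∀ g ∈ Γ, ∀ z : ℂ, 0 < z.im → f (moebius g z) = f z) ∧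
    MeromAtCusps 0 f

/-- The set `L_{h, d/4N}` of vectors
`X = [[b + h/2N, c/N], [-a, -(b + h/2N)]]`, `a, b, c ∈ ℤ`, of norm `q(X) = d/4N`. -/
def LhSet (N : ℕ) (h d : ℤ) : Set (Matrix (Fin 2) (Fin 2) ℝ) :=
  { X | ∃ a b c : ℤ,
      X = !![(b : ℝ) + (h : ℝ) / (2 * N), (c : ℝ) / N;
             -(a : ℝ), -((b : ℝ) + (h : ℝ) / (2 * N))] ∧
      (2 * b * N + h) ^ 2 - 4 * a * c * N = -d }

/-- The map `X ↦ N ⬝ [[0,-1],[1,0]] ⬝ X` from vectors to Gram matrices of quadratic forms. -/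
def vecToForm (N : ℕ) (X : Matrix (Fin 2) (Fin 2) ℝ) : Matrix (Fin 2) (Fin 2) ℝ :=
  (N : ℝ) • (!![(0 : ℝ), -1; 1, 0] * X)

/-- Orbit relation of `Γ` acting by conjugation `g.X = g X g⁻¹` on a set `S` of vectors. -/
def vecRel (Γ : Subgroup SL2R) (S : Set (Matrix (Fin 2) (Fin 2) ℝ)) (X X' : S) : Prop :=
  ∃ g ∈ Γ, X'.1 = g.1 * X.1 * (g⁻¹).1

/-- The Heegner point `D_X ∈ ℍ` of a vector `X` of positive norm. -/
def heegnerC (X : Matrix (Fin 2) (Fin 2) ℝ) : ℂ :=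
  ((X 0 0 / X 1 0 : ℝ) : ℂ) + Complex.I * Real.sqrt (X.det / (X 1 0) ^ 2)

/-- The order of the stabilizer of the vector `X` in `Γ/{±1}`. -/
def vecStabOrder (Γ : Subgroup SL2R) (X : Matrix (Fin 2) (Fin 2) ℝ) : ℕ :=
  Nat.card { g : SL2R // g ∈ Γ ∧ g.1 * X * (g⁻¹).1 = X } / 2

/-- The modular trace `t_f(h, m) = Σ_{X ∈ Γ\L_{h,m}} f(D_X) / |Γ̄_X|`. -/
def vecTrace (Γ : Subgroup SL2R) (f : ℂ → ℂ) (S : Set (Matrix (Fin 2) (Fin 2) ℝ)) : ℂ :=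
  ∑ᶠ O : Quot (vecRel Γ S), f (heegnerC (Quot.out O).1) / (vecStabOrder Γ (Quot.out O).1 : ℂ)

/-- The weight-2 Eisenstein series `E₂(z) = 1 - 24 Σ_{n ≥ 1} σ₁(n) qⁿ`. -/
def E2 (z : ℂ) : ℂ :=
  1 - 24 * ∑' n : ℕ, (∑ d ∈ Nat.divisors (n + 1), (d : ℂ)) * qc z ^ (n + 1)

/-- `E₂^{(N)}(z) = N E₂(Nz) - E₂(z)`. -/
def E2N (N : ℕ) (z : ℂ) : ℂ := (N : ℂ) * E2 ((N : ℂ) * z) - E2 z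

end

lemma intCast_mul_add_ne_zero {c d : ℤ} (h : c ≠ 0 ∨ d ≠ 0) {τ : ℂ} (hτ : 0 < τ.im) :
    (c : ℂ) * τ + d ≠ 0 := by
  intro h0
  have him := congrArg Complex.im h0
  have hre := congrArg Complex.re h0
  simp at him hre
  have hc : c = 0 := him.resolve_right hτ.ne'
  subst hc
  simp at hre h
  exact h hre

lemma im_intCast_moebius_pos {a b c d : ℤ} (h : a * d - b * c = 1) {τ : ℂ} (hτ : 0 < τ.im) :
    0 < (((a : ℂ) * τ + b) / ((c : ℂ) * τ + d)).im := by
  have hden : (c : ℂ) * τ + d ≠ 0 := by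
    refine intCast_mul_add_ne_zero ?_ hτ
    by_contra! h0
    simp [h0.1, h0.2] at h
  have hR : (a : ℝ) * d - b * c = 1 := by exact_mod_cast h
  have hpos := Complex.normSq_pos.mpr hden
  have : (((a : ℂ) * τ + b) / ((c : ℂ) * τ + d)).im =
      τ.im / Complex.normSq ((c : ℂ) * τ + d) := by
    rw [Complex.div_im, ← sub_div]
    congr 1
    simp
    linear_combination τ.im * hR
  rw [this]
  positivity

lemma im_natCast_mul_pos {m : ℕ} (hm : 0 < m) {τ : ℂ} (hτ : 0 < τ.im) :
    0 < ((m : ℂ) * τ).im := by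
  rw [← Complex.ofReal_natCast, Complex.im_ofReal_mul]
  have : (0 : ℝ) < m := by exact_mod_cast hm
  positivity

lemma im_intCast_mul_add_div_pos {A D : ℤ} (hA : 0 < A) (hD : 0 < D) (B : ℤ) {τ : ℂ}
    (hτ : 0 < τ.im) : 0 < (((A : ℂ) * τ + B) / D).im := by
  have h : ((A * τ + B) / D : ℂ) = ((A / D : ℝ) : ℂ) * τ + ((B / D : ℝ) : ℂ) := by
    push_cast
    ring
  rw [h]
  simp only [Complex.add_im, Complex.im_ofReal_mul, Complex.ofReal_im, add_zero]
  have : (0 : ℝ) < A := by exact_mod_cast hA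
  have : (0 : ℝ) < D := by exact_mod_cast hD
  positivity

/-- Multiplication by a residue coprime to the modulus permutes a complete residue system. -/
lemma sum_range_mul_of_periodic {m : ℕ} (hm : 0 < m) {a : ℤ} (ha : IsCoprime a (m : ℤ))
    (g : ℤ → ℂ) (hg : ∀ l t : ℤ, g (l + t * m) = g l) :
    ∑ l ∈ Finset.range m, g (a * l) = ∑ l ∈ Finset.range m, g l := by
  have : NeZero m := ⟨hm.ne'⟩
  let G : ZMod m → ℂ := fun x => g x.val
  have hG (n : ℤ) : g n = G n := by
    have h : ((n : ZMod m).val : ℤ) = n % m := ZMod.val_intCast n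
    simp only [G, h]
    conv_lhs => rw [← Int.emod_add_ediv_mul n m]
    exact hg _ _
  have hrange (H : ZMod m → ℂ) : ∑ l ∈ Finset.range m, H (l : ZMod m) = ∑ x : ZMod m, H x := by
    refine Finset.sum_bij' (fun l _ => (l : ZMod m)) (fun x _ => x.val) ?_ ?_ ?_ ?_ ?_
    · simp
    · exact fun x _ => Finset.mem_range.mpr (ZMod.val_lt x)
    · exact fun l hl => ZMod.val_cast_of_lt (Finset.mem_range.mp hl)
    · exact fun x _ => ZMod.natCast_zmod_val x
    · simp
  have hu : IsUnit (a : ZMod m) := by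
    obtain ⟨s, t, hst⟩ := ha
    refine IsUnit.of_mul_eq_one (s : ZMod m) ?_
    have h := congrArg (Int.cast : ℤ → ZMod m) hst
    push_cast at h
    simpa [mul_comm] using h
  simp only [hG]
  push_cast
  rw [hrange (fun x => G (a * x)), hrange G]
  exact Fintype.sum_equiv (Units.mulLeft hu.unit) _ _ fun x => rfl

/-- An absolutely convergent trigonometric series vanishing identically has zero coefficients. -/
lemma coeff_eq_zero_of_hasSum_fourier {f : ℤ → ℂ}
    (hf : ∀ x : ℝ, HasSum (fun n : ℤ => f n * qc x ^ n) 0) (n : ℤ) : f n = 0 := by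
  have hq (x : ℝ) (j : ℤ) : qc x ^ j = Complex.exp (((2 * Real.pi * j * x : ℝ) : ℂ) * I) := by
    rw [qc, ← Complex.exp_int_mul]
    congr 1
    push_cast
    ring
  have hnorm (x : ℝ) (j : ℤ) : ‖qc x ^ j‖ = 1 := by
    rw [hq, Complex.norm_exp_ofReal_mul_I]
  have hcont (j : ℤ) : Continuous fun x : ℝ => qc x ^ j := by
    simp only [hq]
    fun_prop
  have hne (x : ℝ) : qc x ≠ 0 := Complex.exp_ne_zero _
  have hsum : Summable fun j : ℤ => ‖f j‖ := by
    have h := (hf 0).summable.norm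
    simpa only [norm_mul, hnorm, mul_one] using h
  have hint : HasSum (fun j : ℤ => ∫ x : ℝ in (0 : ℝ)..1, f j * qc x ^ (j - n))
      (∫ x : ℝ in (0 : ℝ)..1, ∑' j : ℤ, f j * qc x ^ (j - n)) := by
    refine intervalIntegral.hasSum_integral_of_dominated_convergence
      (fun j _ => ‖f j‖) (fun j => ?_) (fun j => ?_) ?_ ?_ ?_
    · exact (continuous_const.mul (hcont _)).aestronglyMeasurable
    · exact Filter.Eventually.of_forall fun x _ => by rw [norm_mul, hnorm, mul_one]
    · exact Filter.Eventually.of_forall fun x _ => hsum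
    · exact intervalIntegrable_const
    · refine Filter.Eventually.of_forall fun x _ => Summable.hasSum ?_
      refine Summable.of_norm ?_
      simpa only [norm_mul, hnorm, mul_one] using hsum
  have hzero : ∀ x : ℝ, ∑' j : ℤ, f j * qc x ^ (j - n) = 0 := by
    intro x
    have h := (hf x).mul_right (qc x ^ (-n))
    rw [zero_mul] at h
    refine HasSum.tsum_eq (h.congr_fun fun j => ?_)
    rw [mul_assoc, ← zpow_add₀ (hne x), sub_eq_add_neg]
  simp only [hzero, intervalIntegral.integral_zero] at hint
  have hterm : ∀ j : ℤ, j ≠ n → ∫ x : ℝ in (0 : ℝ)..1, f j * qc x ^ (j - n) = 0 := by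
    intro j hj
    have hjn : ((j - n : ℤ) : ℂ) ≠ 0 := by exact_mod_cast sub_ne_zero.mpr hj
    have hc : (2 * Real.pi * I * ((j - n : ℤ) : ℂ)) ≠ 0 :=
      mul_ne_zero Complex.two_pi_I_ne_zero hjn
    have he (x : ℝ) : qc x ^ (j - n) =
        Complex.exp ((2 * Real.pi * I * ((j - n : ℤ) : ℂ)) * x) := by
      rw [qc, ← Complex.exp_int_mul]
      congr 1
      ring
    simp only [he]
    rw [intervalIntegral.integral_const_mul, integral_exp_mul_complex hc]
    have h1 : Complex.exp (2 * Real.pi * I * ((j - n : ℤ) : ℂ)) = 1 := by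
      rw [mul_comm]
      exact Complex.exp_int_mul_two_pi_mul_I _
    rw [Complex.ofReal_one, Complex.ofReal_zero, mul_one, mul_zero, h1, Complex.exp_zero, sub_self,
      zero_div, mul_zero]
  have h2 := hint.unique (hasSum_single n hterm)
  simpa using h2.symm

/-- Uniqueness of the coefficients of a double Fourier expansion. -/
lemma coeff_eq_zero_of_hasSum_double_fourier {f : ℤ × ℤ → ℂ}
    (hf : ∀ x y : ℝ, HasSum (fun p : ℤ × ℤ => f p * qc x ^ p.1 * qc y ^ p.2) 0)
    (p : ℤ × ℤ) : f p = 0 := by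
  have hswap (x y : ℝ) :
      HasSum (fun p : ℤ × ℤ => f (p.2, p.1) * qc x ^ p.2 * qc y ^ p.1) 0 :=
    (Equiv.prodComm ℤ ℤ).hasSum_iff.mpr (hf x y)
  have hfib (x : ℝ) (r : ℤ) : Summable fun n : ℤ => f (n, r) * qc x ^ n := by
    have h0 : qc (0 : ℝ) = 1 := by simp [qc]
    have h := (hswap x 0).summable.prod_factor r
    simpa only [h0, _root_.one_zpow, mul_one] using h
  have hinner (x : ℝ) (r : ℤ) : ∑' n : ℤ, f (n, r) * qc x ^ n = 0 := by
    refine coeff_eq_zero_of_hasSum_fourier (f := fun r => ∑' n : ℤ, f (n, r) * qc x ^ n)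
      (fun y => ?_) r
    exact HasSum.prod_fiberwise (hswap x y) fun r => (hfib x r).hasSum.mul_right (qc y ^ r)
  exact coeff_eq_zero_of_hasSum_fourier (f := fun n => f (n, p.2))
    (fun x => by
      have h := (hfib x p.2).hasSum
      rwa [hinner x p.2] at h) p.1

namespace WeakJacobiForm

variable {k : ℤ} {m : ℕ} (φ : WeakJacobiForm k m)

/-- The elliptic transformation law on the level of Fourier coefficients. -/
lemma coeff_elliptic (l n r : ℤ) :
    φ.coeff (n + l * r + m * l ^ 2) (r + 2 * m * l) = φ.coeff n r := by
  let e : ℤ × ℤ ≃ ℤ × ℤ :=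
    { toFun := fun p => (p.1 + l * p.2 + m * l ^ 2, p.2 + 2 * m * l)
      invFun := fun p => (p.1 - l * p.2 + m * l ^ 2, p.2 - 2 * m * l)
      left_inv := fun p => by ext <;> simp; ring
      right_inv := fun p => by ext <;> simp; ring }
  have key : ∀ τ z : ℂ, 0 < τ.im → HasSum (fun p : ℤ × ℤ =>
      (φ.coeff (e p).1 (e p).2 - φ.coeff p.1 p.2) * qc τ ^ (e p).1 * qc z ^ (e p).2) 0 := by
    intro τ z hτ
    have h1 := e.hasSum_iff.mpr (φ.expansion τ z hτ)
    have h2 := (φ.expansion τ (z + l * τ) hτ).mul_left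
      (Complex.exp (2 * Real.pi * Complex.I * m * ((l : ℂ) ^ 2 * τ + 2 * l * z)))
    have h3 := φ.elliptic l 0 τ z hτ
    rw [Int.cast_zero, add_zero] at h3
    rw [h3] at h2
    have h4 := h1.sub h2
    rw [sub_self] at h4
    refine h4.congr_fun fun p => ?_
    simp only [Function.comp_apply, e, Equiv.coe_fn_mk, qc, ← Complex.exp_int_mul, mul_assoc,
      sub_mul, ← Complex.exp_add]
    congr 1
    rw [mul_left_comm (Complex.exp _), ← Complex.exp_add]
    congr 2
    push_cast
    ring
  have hzero := coeff_eq_zero_of_hasSum_double_fourier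
    (f := fun p => (φ.coeff p.1 p.2 - φ.coeff (e.symm p).1 (e.symm p).2) * qc I ^ p.1)
    (fun x y => by
      have h := e.symm.hasSum_iff.mpr (key (x + I) y (by simp))
      refine h.congr_fun fun p => ?_
      have hx : qc (x + I) = qc x * qc I := by
        simp only [qc, ← Complex.exp_add, mul_add]
      simp only [Function.comp_apply, Equiv.apply_symm_apply, hx, mul_zpow]
      ring) (e (n, r))
  have hI : qc I ^ (e (n, r)).1 ≠ 0 := zpow_ne_zero _ (Complex.exp_ne_zero _)
  have h := (mul_eq_zero.mp hzero).resolve_right hI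
  rw [Equiv.symm_apply_apply] at h
  exact sub_eq_zero.mp h

/-- The Fourier coefficients vanish outside the intersection of the half-planes
`n + lr + ml² ≥ K`, `l ∈ ℤ`. -/
lemma exists_le_of_coeff_ne_zero :
    ∃ K : ℤ, ∀ n r : ℤ, φ.coeff n r ≠ 0 → ∀ l : ℤ, K ≤ n + l * r + m * l ^ 2 := by
  obtain ⟨K, hK⟩ := φ.coeff_neg_finite.bddBelow
  refine ⟨min K 0, fun n r h l => ?_⟩
  rw [← φ.coeff_elliptic l n r] at h
  rcases lt_or_ge (n + l * r + m * l ^ 2) 0 with h0 | h0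
  · exact (min_le_left _ _).trans (hK ⟨h0, _, h⟩)
  · exact (min_le_right _ _).trans h0

/-- Along a torsion section the exponents occurring in the expansion are bounded below. -/
lemma exists_le_mul_add_of_coeff_ne_zero {A : ℤ} (hA : 0 < A) (y : ℤ) :
    ∃ K : ℤ, ∀ n r : ℤ, φ.coeff n r ≠ 0 → K ≤ n * A + r * y := by
  obtain ⟨K, hK⟩ := φ.exists_le_of_coeff_ne_zero
  refine ⟨(A - y % A) * (K - m * (y / A) ^ 2) + (y % A) * (K - m * (y / A + 1) ^ 2),
    fun n r h => ?_⟩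
  have ht0 : 0 ≤ y % A := Int.emod_nonneg y hA.ne'
  have ht1 : 0 ≤ A - y % A := (sub_pos.mpr (Int.emod_lt_of_pos y hA)).le
  have h1 := mul_le_mul_of_nonneg_left (hK n r h (y / A)) ht1
  have h2 := mul_le_mul_of_nonneg_left (hK n r h (y / A + 1)) ht0
  have h3 : n * A + r * y = n * A + r * (A * (y / A) + y % A) := by
    rw [Int.mul_ediv_add_emod]
  rw [h3]
  linarith

/-- The restriction, twisted by `e^{2πi(uτ + w)}`, of a Jacobi form to the section `z = (xτ + y) / D`, where the
modular variable is `(Aτ + B) / D`, has an expansion in powers of `q^{1/D}` with finite principal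
part. -/
lemma exists_hasSum_section {A D : ℤ} (hA : 0 < A) (hD : 0 < D) (B x y u : ℤ) (w : ℂ) :
    ∃ (cs : ℤ → ℂ) (n₀ : ℤ), (∀ n < n₀, cs n = 0) ∧ ∀ τ : ℂ, 0 < τ.im →
      HasSum (fun n : ℤ => cs n * Complex.exp (2 * Real.pi * I * τ / D) ^ n)
        (Complex.exp (2 * Real.pi * I * (u * τ + w)) *
          φ.toFun ((A * τ + B) / D) ((x * τ + y) / D)) := by
  obtain ⟨K, hK⟩ := φ.exists_le_mul_add_of_coeff_ne_zero hA x
  have hD0 : (D : ℂ) ≠ 0 := by exact_mod_cast hD.ne'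
  let ex : ℤ × ℤ → ℤ := fun p => p.1 * A + p.2 * x + D * u
  let c : ℤ × ℤ → ℂ := fun p => φ.coeff p.1 p.2 *
    Complex.exp (2 * Real.pi * I * ((p.1 * B + p.2 * y) / D + w))
  refine ⟨fun n => ∑' p : ex ⁻¹' {n}, c p, K + D * u, fun n hn => ?_, fun τ hτ => ?_⟩
  · refine (tsum_congr fun p => ?_).trans tsum_zero
    by_contra hne
    have h := hK _ _ (left_ne_zero_of_mul hne)
    have hp : p.1.1 * A + p.1.2 * x + D * u = n := p.2
    linarith
  · have him := im_intCast_mul_add_div_pos hA hD B hτ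
    have h := (φ.expansion _ ((x * τ + y) / D) him).mul_left
      (Complex.exp (2 * Real.pi * I * (u * τ + w)))
    have h' : HasSum (fun p => c p * Complex.exp (2 * Real.pi * I * τ / D) ^ ex p) _ :=
      h.congr_fun fun p => by
        simp only [c, ex, qc, ← Complex.exp_int_mul, mul_assoc, ← Complex.exp_add]
        rw [mul_left_comm (Complex.exp _), ← Complex.exp_add]
        congr 2
        push_cast
        field_simp
        ring
    have h2 := ((Equiv.sigmaFiberEquiv ex).hasSum_iff.mpr h')
    have hfib (n : ℤ) : (∑' p : ex ⁻¹' {n},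
        c p * Complex.exp (2 * Real.pi * I * τ / D) ^ ex p) =
        (∑' p : ex ⁻¹' {n}, c p) * Complex.exp (2 * Real.pi * I * τ / D) ^ n := by
      rw [← tsum_mul_right]
      exact tsum_congr fun p => by rw [show ex p = n from p.2]
    have h3 := h2.sigma fun n => (h2.summable.sigma_factor n).hasSum
    exact h3.congr_fun fun n => (hfib n).symm

/-- The modular transformation law solved for the transformed value. -/
lemma toFun_moebius {p q r s : ℤ} (h : p * s - q * r = 1) {τ : ℂ} (hτ : 0 < τ.im) (z : ℂ)
    (hden : (r : ℂ) * τ + s ≠ 0) :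
    φ.toFun ((p * τ + q) / (r * τ + s)) (z / (r * τ + s)) =
      (r * τ + s) ^ k * Complex.exp (2 * Real.pi * I * m * r * z ^ 2 / (r * τ + s)) *
        φ.toFun τ z := by
  rw [← φ.slash_inv p q r s h τ z hτ, neg_div, Complex.exp_neg, _root_.zpow_neg]
  rw [← mul_assoc, mul_mul_mul_comm, mul_inv_cancel₀ (zpow_ne_zero k hden),
    mul_inv_cancel₀ (Complex.exp_ne_zero _), one_mul, one_mul]

/-- The function `φ̃` in terms of the restrictions of `φ` to the sections `z = ℓτ`. -/
lemma tilde_eq (hm : 0 < m) {τ : ℂ} (hτ : 0 < τ.im) :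
    τ ^ (-k) * ∑ l ∈ Finset.range m, φ.toFun (-1 / ((m : ℂ) * τ)) ((l : ℂ) / (m : ℂ)) =
      (m : ℂ) ^ k * ∑ l ∈ Finset.range m,
        Complex.exp (2 * Real.pi * I * (l ^ 2 * τ)) * φ.toFun (m * τ) (l * τ) := by
  have hm0 : (m : ℂ) ≠ 0 := by exact_mod_cast hm.ne'
  have hτ0 : τ ≠ 0 := by
    rintro rfl
    simp at hτ
  have him := im_natCast_mul_pos hm hτ
  rw [Finset.mul_sum, Finset.mul_sum]
  refine Finset.sum_congr rfl fun l _ => ?_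
  have h := φ.toFun_moebius (p := 0) (q := -1) (r := 1) (s := 0) (by norm_num) him (l * τ)
    (by simpa using ⟨hm.ne', hτ0⟩)
  have hz : (l : ℂ) * τ / (m * τ) = l / m := by field_simp
  have he : 2 * Real.pi * I * m * (l * τ) ^ 2 / (m * τ) = 2 * Real.pi * I * (l ^ 2 * τ) := by
    field_simp
  simp only [Int.cast_zero, Int.cast_one, Int.cast_neg, zero_mul, zero_add, one_mul, add_zero,
    mul_one] at h
  rw [hz, he, mul_zpow] at h
  rw [h, _root_.zpow_neg]
  have := zpow_ne_zero k hτ0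
  field_simp

/-- The slash action of an integral matrix on `φ̃`, for a factorization
`[[ma, mb], [c, d]] = [[p, q], [r, s]] [[A, B], [0, D]]`. -/
lemma tilde_slash (hm : 0 < m) {a b c d p q r s A B D : ℤ} (hdet : a * d - b * c = 1)
    (hdet' : p * s - q * r = 1) (hA : 0 < A) (hD : 0 < D) (ha : m * a = p * A)
    (hb : m * b = p * B + q * D) (hc : c = r * A) (hd : d = r * B + s * D) {τ : ℂ}
    (hτ : 0 < τ.im) {F : ℂ → ℂ}
    (hF : ∀ τ : ℂ, F τ =
      τ ^ (-k) * ∑ l ∈ Finset.range m, φ.toFun (-1 / ((m : ℂ) * τ)) ((l : ℂ) / (m : ℂ))) :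
    ((c : ℂ) * τ + d) ^ (-k) * F (((a : ℂ) * τ + b) / ((c : ℂ) * τ + d)) =
      ((m : ℂ) / D) ^ k * ∑ l ∈ Finset.range m,
        Complex.exp (2 * Real.pi * I * (((l * a) ^ 2 : ℤ) * τ + (l ^ 2 * a * b : ℤ))) *
          φ.toFun ((A * τ + B) / D) (((l * a : ℤ) * τ + (l * b : ℤ)) / D) := by
  have hD0 : (D : ℂ) ≠ 0 := by exact_mod_cast hD.ne'
  have hAD : (m : ℤ) = A * D := by
    linear_combination (-(m : ℤ)) * hdet + d * ha - c * hb + A * D * hdet' +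
      (- p * B - q * D) * hc + p * A * hd
  have hden : (c : ℂ) * τ + d ≠ 0 := by
    refine intCast_mul_add_ne_zero ?_ hτ
    by_contra! h0
    simp [h0.1, h0.2] at hdet
  have hdenD : (r : ℂ) * ((A * τ + B) / D) + s = (c * τ + d) / D := by
    rw [hc, hd]
    push_cast
    field_simp
    ring
  have him := im_intCast_mul_add_div_pos hA hD B hτ
  have haC : (m : ℂ) * a = p * A := by exact_mod_cast ha
  have hbC : (m : ℂ) * b = p * B + q * D := by exact_mod_cast hb
  have hdetC : (a : ℂ) * d - b * c = 1 := by exact_mod_cast hdet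
  have hmr : (m : ℂ) * r = c * D := by
    rw [hc]
    have : (m : ℂ) = A * D := by exact_mod_cast hAD
    rw [this]
    push_cast
    ring
  rw [hF, φ.tilde_eq hm (im_intCast_moebius_pos hdet hτ), Finset.mul_sum, Finset.mul_sum,
    Finset.mul_sum]
  refine Finset.sum_congr rfl fun l _ => ?_
  have h := φ.toFun_moebius hdet' him (((l * a : ℤ) * τ + (l * b : ℤ)) / D)
    (by rw [hdenD]; exact div_ne_zero hden hD0)
  rw [hdenD] at h
  have hmod : ((p : ℂ) * ((A * τ + B) / D) + q) / ((c * τ + d) / D) =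
      m * ((a * τ + b) / (c * τ + d)) := by
    rw [div_div_eq_mul_div, ← mul_div_assoc (m : ℂ), div_left_inj' hden]
    field_simp
    linear_combination (-τ) * haC - hbC
  have hz : (((l * a : ℤ) : ℂ) * τ + (l * b : ℤ)) / D / ((c * τ + d) / D) =
      l * ((a * τ + b) / (c * τ + d)) := by
    push_cast
    field_simp
  rw [hmod, hz] at h
  have he : Complex.exp (2 * Real.pi * I * (l ^ 2 * ((a * τ + b) / (c * τ + d)))) *
      Complex.exp (2 * Real.pi * I * m * r * ((((l * a : ℤ) : ℂ) * τ + (l * b : ℤ)) / D) ^ 2 /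
        ((c * τ + d) / D)) =
      Complex.exp (2 * Real.pi * I * (((l * a) ^ 2 : ℤ) * τ + (l ^ 2 * a * b : ℤ))) := by
    have h1 : (a * τ + b) / (c * τ + d) + c * (a * τ + b) ^ 2 / (c * τ + d) =
        a * (a * τ + b) := by
      rw [← add_div, div_eq_iff hden]
      linear_combination (-(a * τ + b)) * hdetC
    have h2 : 2 * Real.pi * I * (c * D) * ((((l * a : ℤ) : ℂ) * τ + (l * b : ℤ)) / D) ^ 2 /
        ((c * τ + d) / D) =
        2 * Real.pi * I * (l ^ 2 * (c * (a * τ + b) ^ 2 / (c * τ + d))) := by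
      push_cast
      field_simp
    rw [← Complex.exp_add, mul_assoc (2 * Real.pi * I) (m : ℂ), hmr, h2]
    congr 1
    push_cast
    linear_combination (2 * Real.pi * I * l ^ 2) * h1
  rw [h, ← he, div_zpow, div_zpow, _root_.zpow_neg]
  have h1 := zpow_ne_zero k hden
  have h2 := zpow_ne_zero k hD0
  field_simp

end WeakJacobiForm

/-- An integral matrix with nonzero first column and positive determinant is the product of a
matrix in `SL(2, ℤ)` and an upper triangular one with positive diagonal. -/
lemma exists_upper_triangular_factorization {a b c d N : ℤ} (hN : 0 < N)
    (h : a * d - b * c = N) :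
    ∃ p q r s A B D : ℤ, p * s - q * r = 1 ∧ 0 < A ∧ 0 < D ∧ a = p * A ∧ b = p * B + q * D ∧
      c = r * A ∧ d = r * B + s * D := by
  have hgcd : 0 < Int.gcd a c := by
    refine Int.gcd_pos_iff.mpr ?_
    by_contra! h0
    simp [h0.1, h0.2] at h
    omega
  obtain ⟨p, hp⟩ := Int.gcd_dvd_left a c
  obtain ⟨r, hr⟩ := Int.gcd_dvd_right a c
  have hA : (0 : ℤ) < Int.gcd a c := by exact_mod_cast hgcd
  have hbez := Int.gcd_eq_gcd_ab a c
  generalize (Int.gcd a c : ℤ) = A at hp hr hA hbez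
  generalize Int.gcdA a c = s at hbez
  generalize Int.gcdB a c = t at hbez
  have hdet : p * s - (-t) * r = 1 := by
    refine mul_left_cancel₀ hA.ne' ?_
    linear_combination (-1 : ℤ) * hbez - s * hp - t * hr
  have hAD : A * (p * d - r * b) = N := by linear_combination h - d * hp + b * hr
  refine ⟨p, -t, r, s, A, s * b + t * d, p * d - r * b, hdet, hA, ?_, ?_, ?_, ?_, ?_⟩
  · exact pos_of_mul_pos_right (hAD ▸ hN) hA.le
  · linear_combination hp
  · linear_combination (-b) * hdet
  · linear_combination hr
  · linear_combination (-d) * hdet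

/-- **Lemma 2.2.** If `φ` is a weakly holomorphic Jacobi form of even weight `k` and index `m`,
then `φ̃(τ) = τ^{-k} Σ_{ℓ=0}^{m-1} φ(-1/(mτ), ℓ/m)` is a weakly holomorphic modular form of
weight `k` on `Γ₀(m)`. -/
theorem jacobi_to_modular_form (k : ℤ) (hk : Even k) (m : ℕ) (hm : 0 < m)
    (φ : WeakJacobiForm k m) (F : ℂ → ℂ)
    (hF : ∀ τ : ℂ, F τ =
      τ ^ (-k) * ∑ ℓ ∈ Finset.range m, φ.toFun (-1 / ((m : ℂ) * τ)) ((ℓ : ℂ) / (m : ℂ))) :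
    DifferentiableOn ℂ F {τ : ℂ | 0 < τ.im} ∧
      (∀ a b c d : ℤ, a * d - b * c = 1 → (m : ℤ) ∣ c → ∀ τ : ℂ, 0 < τ.im →
        F (((a : ℂ) * τ + b) / ((c : ℂ) * τ + d)) = ((c : ℂ) * τ + d) ^ k * F τ) ∧
      MeromAtCusps k F := by
  have hm0 : (m : ℂ) ≠ 0 := by exact_mod_cast hm.ne'
  refine ⟨?_, ?_, ?_⟩
  · have hne : ∀ τ ∈ {τ : ℂ | 0 < τ.im}, τ ≠ 0 := by
      rintro τ hτ rfl
      simp at hτ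
    have hpt (l : ℕ) : DifferentiableOn ℂ
        (fun τ : ℂ => φ.toFun (-1 / ((m : ℂ) * τ)) ((l : ℂ) / (m : ℂ))) {τ : ℂ | 0 < τ.im} := by
      refine φ.holo.comp (f := fun τ : ℂ => (-1 / ((m : ℂ) * τ), (l : ℂ) / (m : ℂ))) ?_ ?_
      · refine DifferentiableOn.prodMk ?_ (differentiableOn_const _)
        exact (differentiableOn_const _).div (differentiableOn_id.const_mul _)
          fun τ hτ => mul_ne_zero hm0 (hne τ hτ)
      · intro τ hτ
        refine ⟨?_, Set.mem_univ _⟩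
        have him := im_natCast_mul_pos hm hτ
        simpa using im_intCast_moebius_pos (a := 0) (b := -1) (c := 1) (d := 0) (by norm_num) him
    refine DifferentiableOn.congr ?_ fun τ _ => hF τ
    refine DifferentiableOn.mul (fun τ hτ => ?_) (DifferentiableOn.fun_sum fun l _ => hpt l)
    exact (differentiableAt_zpow.mpr (Or.inl (hne τ hτ))).differentiableWithinAt
  · rintro a b c d hdet ⟨c', hc⟩ τ hτ
    have hden : (c : ℂ) * τ + d ≠ 0 := by
      refine intCast_mul_add_ne_zero ?_ hτ
      by_contra! h0
      simp [h0.1, h0.2] at hdet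
    have him := im_natCast_mul_pos hm hτ
    have hmZ : (0 : ℤ) < m := by exact_mod_cast hm
    have h := φ.tilde_slash hm (p := a) (q := m * b) (r := c') (s := d) (A := m) (B := 0) (D := 1)
      hdet (by rw [← hdet, hc]; ring) hmZ one_pos (by ring) (by ring) (by rw [hc]; ring) (by ring)
      hτ hF
    let g : ℤ → ℂ := fun l =>
      Complex.exp (2 * Real.pi * I * (l ^ 2 * τ)) * φ.toFun (m * τ) (l * τ)
    have hg (l t : ℤ) : g (l + t * m) = g l := by
      have h1 := φ.elliptic t 0 (m * τ) (l * τ) him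
      simp only [g]
      rw [← h1, ← mul_assoc (Complex.exp _) (Complex.exp _), ← Complex.exp_add]
      push_cast
      congr 2 <;> ring
    have hcop : IsCoprime a (m : ℤ) := ⟨d, -(b * c'), by rw [← hdet, hc]; ring⟩
    have hterm (l : ℕ) :
        Complex.exp (2 * Real.pi * I * (((l * a) ^ 2 : ℤ) * τ + (l ^ 2 * a * b : ℤ))) *
          φ.toFun (((m : ℤ) * τ + (0 : ℤ)) / (1 : ℤ))
            (((l * a : ℤ) * τ + (l * b : ℤ)) / (1 : ℤ)) = g (a * l) := by
      have h1 := φ.elliptic 0 (l * b) (m * τ) ((l * a : ℤ) * τ) him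
      simp only [Int.cast_zero, zero_mul, mul_zero, ne_eq, OfNat.ofNat_ne_zero, not_false_eq_true,
        zero_pow, add_zero, Complex.exp_zero, one_mul] at h1
      have h2 : Complex.exp (2 * Real.pi * I * (l ^ 2 * a * b : ℤ)) = 1 := by
        rw [mul_comm]
        exact Complex.exp_int_mul_two_pi_mul_I _
      simp only [Int.cast_zero, Int.cast_one, div_one, add_zero, Int.cast_natCast]
      rw [h1, mul_add, Complex.exp_add, h2, mul_one]
      simp only [g]
      push_cast
      rw [mul_comm (l : ℂ) (a : ℂ)]
    have hFτ : F τ = (m : ℂ) ^ k * ∑ l ∈ Finset.range m, g l := by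
      rw [hF, φ.tilde_eq hm hτ]
      simp only [g, Int.cast_natCast]
    simp only [hterm] at h
    rw [sum_range_mul_of_periodic hm hcop g hg, Int.cast_one, div_one, ← hFτ, _root_.zpow_neg] at h
    rw [← h, mul_inv_cancel_left₀ (zpow_ne_zero k hden)]
  · intro a b c d hdet
    have hmZ : (0 : ℤ) < m := by exact_mod_cast hm
    obtain ⟨p, q, r, s, A, B, D, hdet', hA, hD, ha, hb, hc, hd⟩ :=
      exists_upper_triangular_factorization (a := m * a) (b := m * b) (c := c) (d := d) hmZ
        (by linear_combination (m : ℤ) * hdet)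
    choose cs n₀ hcs hsum using fun l : ℕ =>
      φ.exists_hasSum_section hA hD B (l * a) (l * b) ((l * a) ^ 2) ((l ^ 2 * a * b : ℤ) : ℂ)
    obtain ⟨N, hN⟩ := ((Finset.range m).image n₀).bddBelow
    have hDM : ((D.toNat : ℕ) : ℂ) = (D : ℂ) := by
      rw [← Int.cast_natCast, Int.toNat_of_nonneg hD.le]
    refine ⟨D.toNat, fun n => ((m : ℂ) / D) ^ k * ∑ l ∈ Finset.range m, cs l n, N, by omega,
      fun τ hτ => ?_⟩
    rw [φ.tilde_slash hm hdet hdet' hA hD ha hb hc hd hτ hF, hDM]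
    have h := (hasSum_sum fun l (_ : l ∈ Finset.range m) => hsum l τ hτ).mul_left
      (((m : ℂ) / D) ^ k)
    have hinj : Function.Injective fun j : ℕ => N + (j : ℤ) := fun i j hij => by simpa using hij
    refine ((hinj.hasSum_iff fun n hn => ?_).mpr h).congr_fun fun j => ?_
    · have hlt : n < N := by
        by_contra! hle
        exact hn ⟨(n - N).toNat, by simp [Int.toNat_of_nonneg (sub_nonneg.mpr hle)]⟩
      rw [Finset.sum_eq_zero fun l hl => ?_, mul_zero]
      rw [hcs l n (hlt.trans_le (hN (Finset.mem_image_of_mem _ hl))), zero_mul]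
    · simp only [Function.comp_apply, Finset.sum_mul, mul_assoc]
end

section
/- Let φ(τ,z) be a weakly holomorphic Jacobi form of weight k and index m. Then the function F(τ) := Σ_{ℓ=0}^{m-1} φ(τ, ℓ/m) satisfies F|_k[[a,b],[c,d]] = F for every [[a,b],[c,d]] ∈ Γ₀(m), where (F|_k γ)(τ) = (cτ+d)^{-k} F((aτ+b)/(cτ+d)). -/
open Complex Matrix

/-- Multiplication by a unit modulo `m` permutes the values of an `m`-periodic function over a
full period. -/
theorem sum_range_mul_of_periodic_s6 {M : Type*} [AddCommMonoid M] {m : ℕ} (hm : 0 < m)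
    {f : ℤ → M} (hf : Function.Periodic f (m : ℤ)) {a d : ℤ} (had : (m : ℤ) ∣ a * d - 1) :
    ∑ l ∈ Finset.range m, f (d * l) = ∑ l ∈ Finset.range m, f l := by
  have hm0 : (m : ℤ) ≠ 0 := by exact_mod_cast hm.ne'
  have hcast (n : ℤ) : ((n % m).toNat : ℤ) = n % m :=
    Int.toNat_of_nonneg (Int.emod_nonneg _ hm0)
  have hmem (n : ℤ) : (n % m).toNat ∈ Finset.range m := by
    have := Int.emod_lt_of_pos n (Int.natCast_pos.mpr hm)
    have := hcast n
    rw [Finset.mem_range]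
    omega
  have hinv {x y : ℤ} (hxy : (m : ℤ) ∣ x * y - 1) {l : ℕ} (hl : l ∈ Finset.range m) :
      (x * ((y * l % m).toNat : ℤ) % m).toNat = l := by
    have h : (l : ℤ) ≡ x * (y * l) [ZMOD m] := by
      rw [Int.modEq_iff_dvd]
      have := hxy.mul_right (l : ℤ)
      rwa [show x * (y * l) - (l : ℤ) = (x * y - 1) * l by ring]
    rw [hcast, Int.mul_emod, Int.emod_emod, ← Int.mul_emod, ← h,
      Int.emod_eq_of_lt (by positivity) (by exact_mod_cast Finset.mem_range.mp hl),
      Int.toNat_natCast]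
  refine Finset.sum_nbij' (fun l => (d * l % m).toNat) (fun l => (a * l % m).toNat)
    (fun l _ => hmem _) (fun l _ => hmem _) (fun l hl => hinv had hl)
    (fun l hl => hinv (mul_comm a d ▸ had) hl) (fun l _ => ?_)
  rw [hcast, Int.emod_def, mul_comm (m : ℤ)]
  exact (hf.sub_int_mul_eq _).symm

/-- The value of a Jacobi form at an `m`-torsion point of the real period transforms under
`Γ₀(m)` by multiplying the torsion point by the lower right entry. -/
theorem WeakJacobiForm.slash_torsion {k : ℤ} {m : ℕ} (hm : 0 < m) (φ : WeakJacobiForm k m)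
    {a b c d : ℤ} (hdet : a * d - b * c = 1) (hc : (m : ℤ) ∣ c) {τ : ℂ} (hτ : 0 < τ.im) (l : ℤ) :
    ((c : ℂ) * τ + d) ^ (-k) * φ.toFun (((a : ℂ) * τ + b) / ((c : ℂ) * τ + d)) ((l : ℂ) / m) =
      φ.toFun τ (((d * l : ℤ) : ℂ) / m) := by
  obtain ⟨e, rfl⟩ := hc
  have hm0 : (m : ℂ) ≠ 0 := by exact_mod_cast hm.ne'
  have hJ : (((m : ℤ) * e : ℤ) : ℂ) * τ + d ≠ 0 := by
    intro h
    have him := congrArg Complex.im h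
    have hre := congrArg Complex.re h
    have hce : (((m : ℤ) * e : ℤ) : ℝ) = 0 := by
      have : (((m : ℤ) * e : ℤ) : ℝ) * τ.im = 0 := by simpa using him
      exact (mul_eq_zero.mp this).resolve_right hτ.ne'
    have hc0 : (m : ℤ) * e = 0 := by exact_mod_cast hce
    rw [hc0] at hre hdet
    have hd : d = 0 := by simpa using hre
    simp [hd] at hdet
  have hs := φ.slash_inv a b _ d hdet τ
    ((l : ℂ) / m * ((((m : ℤ) * e : ℤ) : ℂ) * τ + d)) hτ
  have he := φ.elliptic (l * e) 0 τ (((d * l : ℤ) : ℂ) / m) hτ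
  rw [mul_div_cancel_right₀ _ hJ] at hs
  rw [← he, show ((d * l : ℤ) : ℂ) / m + ((l * e : ℤ) : ℂ) * τ + ((0 : ℤ) : ℂ) =
    (l : ℂ) / m * ((((m : ℤ) * e : ℤ) : ℂ) * τ + d) by push_cast; field_simp; ring, ← hs]
  have hexp : ∀ x y w v : ℂ, Complex.exp x * Complex.exp y = 1 →
      w * v = Complex.exp x * (w * Complex.exp y * v) := by
    intro x y w v h
    linear_combination (-w * v) * h
  apply hexp
  rw [← Complex.exp_add, Complex.exp_eq_one_iff]
  refine ⟨e * l ^ 2 * d, ?_⟩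
  push_cast at hJ ⊢
  field_simp
  ring

/-- **First step in the proof of Lemma 2.2.** For a weakly holomorphic Jacobi form `φ` of
weight `k` and index `m`, the function `F(τ) = Σ_{ℓ=0}^{m-1} φ(τ, ℓ/m)` satisfies
`F|_k γ = F` for every `γ ∈ Γ₀(m)`. -/
theorem jacobi_average_slash_invariant (k : ℤ) (m : ℕ) (hm : 0 < m)
    (φ : WeakJacobiForm k m)
    (a b c d : ℤ) (hdet : a * d - b * c = 1) (hc : (m : ℤ) ∣ c)
    (τ : ℂ) (hτ : 0 < τ.im) :
    ((c : ℂ) * τ + d) ^ (-k) *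
        ∑ ℓ ∈ Finset.range m,
          φ.toFun (((a : ℂ) * τ + b) / ((c : ℂ) * τ + d)) ((ℓ : ℂ) / (m : ℂ)) =
      ∑ ℓ ∈ Finset.range m, φ.toFun τ ((ℓ : ℂ) / (m : ℂ)) := by
  rw [Finset.mul_sum]
  have hm0 : (m : ℂ) ≠ 0 := by exact_mod_cast hm.ne'
  have hper : Function.Periodic (fun l : ℤ => φ.toFun τ ((l : ℂ) / m)) (m : ℤ) := by
    intro l
    have h := φ.elliptic 0 1 τ ((l : ℂ) / m) hτ
    simpa [add_div, hm0] using h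
  have had : (m : ℤ) ∣ a * d - 1 := by
    rw [show a * d - 1 = b * c by linarith]
    exact hc.mul_left b
  have hsum := sum_range_mul_of_periodic_s6 hm hper had
  simp only [Int.cast_natCast] at hsum
  rw [← hsum]
  refine Finset.sum_congr rfl fun l _ => ?_
  simpa using φ.slash_torsion hm hdet hc hτ l
end

section
/- Let N ∈ {2, 3, 5, 6, 7, 10, 13} and let f be a weakly holomorphic modular function on the Fricke group Γ₀*(N). Then for every positive integer d with -d a square mod 4N and every h mod 2N with h² ≡ -d (mod 4N), one has t_f^{(h)}(d) = 2^{μ_N(d)} · t_f*(d), where μ_N(d) is the number of prime factors of gcd(N, d). In particular t_f^{(h)}(d) is independent of the choice of h. -/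
open Complex Matrix

namespace AtkinLehner

theorem entries {N e : ℕ} (he : 0 < e) {g : SL2R} {x y z w : ℤ}
    (hg : g.1 = (Real.sqrt e)⁻¹ • !![(x : ℝ) * e, (y : ℝ); (z : ℝ) * N, (w : ℝ) * e]) :
    0 < Real.sqrt e ∧ Real.sqrt e ^ 2 = e ∧ g.1 0 0 = x * Real.sqrt e ∧
      g.1 0 1 * Real.sqrt e = y ∧ g.1 1 0 * Real.sqrt e = z * N ∧ g.1 1 1 = w * Real.sqrt e := by
  have hs : 0 < Real.sqrt e := Real.sqrt_pos.2 (by exact_mod_cast he)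
  have hs2 : Real.sqrt e ^ 2 = e := Real.sq_sqrt (Nat.cast_nonneg e)
  refine ⟨hs, hs2, ?_, ?_, ?_, ?_⟩ <;>
    simp only [hg, Matrix.smul_apply, Matrix.of_apply, Matrix.cons_val', Matrix.cons_val_zero,
      Matrix.cons_val_one, Matrix.cons_val_fin_one, smul_eq_mul] <;> field_simp
  all_goals rw [hs2, mul_comm]

theorem mem_of_entries {N e : ℕ} (he : 0 < e) {g : SL2R} {x y z w : ℤ}
    (h00 : g.1 0 0 = x * Real.sqrt e) (h01 : g.1 0 1 * Real.sqrt e = y)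
    (h10 : g.1 1 0 * Real.sqrt e = z * N) (h11 : g.1 1 1 = w * Real.sqrt e) :
    g ∈ atkinLehnerSet N e := by
  have hs : 0 < Real.sqrt e := Real.sqrt_pos.2 (by exact_mod_cast he)
  have hs2 : Real.sqrt e ^ 2 = e := Real.sq_sqrt (Nat.cast_nonneg e)
  refine ⟨x, y, z, w, ?_⟩
  ext i j
  fin_cases i <;> fin_cases j <;> simp
  · rw [h00]; field_simp; rw [hs2]
  · rw [← h01]; field_simp
  · rw [← h10]; field_simp
  · rw [h11]; field_simp; rw [hs2]

theorem det_entries (g : SL2R) : g.1 0 0 * g.1 1 1 - g.1 0 1 * g.1 1 0 = 1 := by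
  rw [← Matrix.det_fin_two]; exact g.2

/-- The determinant condition on the integral parameters of an Atkin–Lehner matrix. -/
theorem det_params {e k : ℕ} (he : 0 < e) {g : SL2R} {x y z w : ℤ}
    (hg : g.1 = (Real.sqrt e)⁻¹ •
      !![(x : ℝ) * e, (y : ℝ); (z : ℝ) * (e * k : ℕ), (w : ℝ) * e]) :
    x * w * e - y * z * k = 1 := by
  obtain ⟨hs, hs2, h00, h01, h10, h11⟩ := entries he hg
  have hd := det_entries g
  have he' : (e : ℝ) ≠ 0 := by exact_mod_cast he.ne'
  push_cast at h10
  have : ((x * w * e - y * z * k : ℤ) : ℝ) * e = 1 * e := by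
    push_cast
    have h2 : (y : ℝ) * (z * (e * k)) = g.1 0 1 * g.1 1 0 * e := by
      linear_combination (-(z * (e * k) : ℝ)) * h01 - g.1 0 1 * Real.sqrt e * h10 +
        g.1 0 1 * g.1 1 0 * hs2
    have h3 : g.1 0 0 * g.1 1 1 = x * w * e := by
      rw [h00, h11]; linear_combination (x * w : ℝ) * hs2
    rw [h3] at hd
    linear_combination e * hd - h2
  exact_mod_cast mul_right_cancel₀ he' this

theorem mul_mem {N k u v : ℕ} (hk : 0 < k) (hu : 0 < u) (hv : 0 < v) (hN : k * u * v ∣ N)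
    {g g' : SL2R} (hg : g ∈ atkinLehnerSet N (k * u)) (hg' : g' ∈ atkinLehnerSet N (k * v)) :
    g * g' ∈ atkinLehnerSet N (u * v) := by
  obtain ⟨x, y, z, w, hg⟩ := hg
  obtain ⟨x', y', z', w', hg'⟩ := hg'
  obtain ⟨m, rfl⟩ := hN
  obtain ⟨-, -, h00, h01, h10, h11⟩ := entries (Nat.mul_pos hk hu) hg
  obtain ⟨-, -, h00', h01', h10', h11'⟩ := entries (Nat.mul_pos hk hv) hg'
  have hkp : 0 < Real.sqrt k := Real.sqrt_pos.2 (by exact_mod_cast hk)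
  have hup : 0 < Real.sqrt u := Real.sqrt_pos.2 (by exact_mod_cast hu)
  have hvp : 0 < Real.sqrt v := Real.sqrt_pos.2 (by exact_mod_cast hv)
  have hk2 : (k : ℝ) = Real.sqrt k ^ 2 := (Real.sq_sqrt (Nat.cast_nonneg k)).symm
  have hu2 : (u : ℝ) = Real.sqrt u ^ 2 := (Real.sq_sqrt (Nat.cast_nonneg u)).symm
  have hv2 : (v : ℝ) = Real.sqrt v ^ 2 := (Real.sq_sqrt (Nat.cast_nonneg v)).symm
  have hs : ∀ a b : ℕ, Real.sqrt (a * b : ℕ) = Real.sqrt a * Real.sqrt b := fun a b => by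
    push_cast; exact Real.sqrt_mul (Nat.cast_nonneg a) _
  rw [hs] at h00 h01 h10 h11 h00' h01' h10' h11'
  push_cast at h00 h01 h10 h11 h00' h01' h10' h11'
  generalize Real.sqrt k = K at *
  generalize Real.sqrt u = U at *
  generalize Real.sqrt v = V at *
  rw [← eq_div_iff (by positivity)] at h01 h10 h01' h10'
  refine mem_of_entries (x := x * x' * k + y * z' * m) (y := x * u * y' + y * w' * v)
    (z := z * x' * v + w * u * z') (w := z * y' * m + w * w' * k) (Nat.mul_pos hu hv) ?_ ?_ ?_ ?_
  all_goals
    rw [hs]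
    simp only [Matrix.SpecialLinearGroup.coe_mul, Matrix.mul_apply, Fin.sum_univ_two,
      h00, h01, h10, h11, h00', h01', h10', h11']
    push_cast
    simp only [hk2, hu2, hv2, Real.sqrt_sq hup.le, Real.sqrt_sq hvp.le]
    field_simp

theorem inv_mem {N e : ℕ} (he : 0 < e) {g : SL2R} (hg : g ∈ atkinLehnerSet N e) :
    g⁻¹ ∈ atkinLehnerSet N e := by
  obtain ⟨x, y, z, w, hg⟩ := hg
  obtain ⟨-, -, h00, h01, h10, h11⟩ := entries he hg
  refine mem_of_entries (x := w) (y := -y) (z := -z) (w := x) he ?_ ?_ ?_ ?_ <;>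
    simp [Matrix.SpecialLinearGroup.coe_inv, Matrix.adjugate_fin_two, h00, h01, h10, h11]

theorem mem_one_iff {N : ℕ} {g : SL2R} : g ∈ atkinLehnerSet N 1 ↔ g ∈ Gamma0SL2R N := by
  constructor
  · rintro ⟨x, y, z, w, hg⟩
    have hdet := det_params (k := N) one_pos (by simpa using hg)
    obtain ⟨γ, hγ⟩ : ∃ γ : Matrix.SpecialLinearGroup (Fin 2) ℤ, γ.1 = !![x, y; z * N, w] :=
      ⟨⟨!![x, y; z * N, w], by rw [Matrix.det_fin_two_of]; push_cast at hdet; linarith⟩, rfl⟩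
    refine Subgroup.mem_map.2 ⟨γ, ?_, ?_⟩
    · rw [CongruenceSubgroup.Gamma0_mem]; simp [hγ]
    · ext i j
      rw [hg]
      fin_cases i <;> fin_cases j <;> simp [hγ]
  · intro hg
    obtain ⟨γ, hγ, rfl⟩ := Subgroup.mem_map.1 hg
    rw [CongruenceSubgroup.Gamma0_mem, ZMod.intCast_zmod_eq_zero_iff_dvd] at hγ
    obtain ⟨z, hz⟩ := hγ
    refine ⟨γ 0 0, γ 0 1, z, γ 1 1, ?_⟩
    ext i j
    fin_cases i <;> fin_cases j <;> simp [hz, mul_comm]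

theorem eq_one_of_one_mem {N e : ℕ} (he : 0 < e) (h : (1 : SL2R) ∈ atkinLehnerSet N e) :
    e = 1 := by
  obtain ⟨x, y, z, w, hg⟩ := h
  obtain ⟨-, hs2, h00, -, -, -⟩ := entries he hg
  have h1 : ((x ^ 2 * e : ℤ) : ℝ) = 1 := by
    push_cast
    have : (1 : ℝ) = x * Real.sqrt e := by simpa using h00
    rw [← hs2, ← mul_pow, ← this, one_pow]
  have h2 : (e : ℤ) ∣ 1 := ⟨x ^ 2, by rw [mul_comm]; exact_mod_cast h1.symm⟩
  exact_mod_cast Int.eq_one_of_dvd_one (by positivity) h2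

theorem exists_factor {n e e' : ℕ} (hn : 0 < n) (he : e ∣ n) (he' : e' ∣ n) :
    ∃ k u v : ℕ, 0 < k ∧ 0 < u ∧ 0 < v ∧ e = k * u ∧ e' = k * v ∧ k * u * v ∣ n := by
  have hp := Nat.pos_of_dvd_of_pos he hn
  have hp' := Nat.pos_of_dvd_of_pos he' hn
  have hl := Nat.lcm_dvd he he'
  obtain ⟨u, hu⟩ := Nat.gcd_dvd_left e e'
  obtain ⟨v, hv⟩ := Nat.gcd_dvd_right e e'
  have hk := Nat.gcd_pos_of_pos_left e' hp
  refine ⟨e.gcd e', u, v, hk, ?_, ?_, hu, hv, ?_⟩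
  · exact Nat.pos_of_ne_zero fun h0 => hp.ne' (by rw [hu, h0, mul_zero])
  · exact Nat.pos_of_ne_zero fun h0 => hp'.ne' (by rw [hv, h0, mul_zero])
  · have : e.gcd e' * e.lcm e' = e.gcd e' * (e.gcd e' * u * v) := by
      rw [Nat.gcd_mul_lcm, ← hu]
      calc e * e' = e * (e.gcd e' * v) := by rw [← hv]
        _ = _ := by ring
    rwa [Nat.eq_of_mul_eq_mul_left hk this] at hl

theorem level_unique {N e e' : ℕ} (hN : 0 < N) (he : e ∣ N) (he' : e' ∣ N) {g : SL2R}
    (hg : g ∈ atkinLehnerSet N e) (hg' : g ∈ atkinLehnerSet N e') : e = e' := by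
  obtain ⟨k, u, v, hk, hu, hv, rfl, rfl, hd⟩ := exists_factor hN he he'
  have h := mul_mem hk hu hv hd hg (inv_mem (Nat.mul_pos hk hv) hg')
  rw [mul_inv_cancel] at h
  have h1 := eq_one_of_one_mem (Nat.mul_pos hu hv) h
  rw [Nat.eq_one_of_mul_eq_one_right h1, Nat.eq_one_of_mul_eq_one_left h1]

theorem nonempty {N e : ℕ} (he : 0 < e) (heN : e ∣ N) (hc : Nat.Coprime e (N / e)) :
    ∃ g, g ∈ atkinLehnerSet N e := by
  obtain ⟨k, rfl⟩ := heN
  rw [Nat.mul_div_cancel_left _ he] at hc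
  have hb := Nat.gcd_eq_gcd_ab e k
  rw [hc.gcd_eq_one] at hb
  have hb' : (1 : ℝ) = e * (e.gcdA k : ℤ) + k * (e.gcdB k : ℤ) := by exact_mod_cast hb
  have hs : 0 < Real.sqrt e := Real.sqrt_pos.2 (by exact_mod_cast he)
  have hs2 : Real.sqrt e ^ 2 = e := Real.sq_sqrt (Nat.cast_nonneg e)
  refine ⟨⟨!![((e.gcdA k : ℤ) : ℝ) * Real.sqrt e, -((e.gcdB k : ℤ) : ℝ) / Real.sqrt e;
    k * Real.sqrt e, Real.sqrt e], ?_⟩, mem_of_entries (x := e.gcdA k) (y := -e.gcdB k) (z := 1)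
    (w := 1) he ?_ ?_ ?_ ?_⟩
  · rw [Matrix.det_fin_two_of]; field_simp; rw [hs2]; linarith
  · simp
  · simp; field_simp
  · simp; linear_combination (k : ℝ) * hs2
  · simp

theorem coprime_of_mem {N e : ℕ} (he : 0 < e) (heN : e ∣ N) {g : SL2R}
    (hg : g ∈ atkinLehnerSet N e) : Nat.Coprime e (N / e) := by
  obtain ⟨k, rfl⟩ := heN
  obtain ⟨x, y, z, w, hg⟩ := hg
  rw [Nat.mul_div_cancel_left _ he, ← Nat.isCoprime_iff_coprime]
  exact ⟨x * w, -(y * z), by linear_combination det_params he hg⟩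

/-- The group of all Atkin–Lehner matrices `W_e` of level `N` with `e ∣ n`. -/
def subgroup {N n : ℕ} (hN : 0 < N) (hn : n ∣ N) : Subgroup SL2R where
  carrier := {g | ∃ e, e ∣ n ∧ g ∈ atkinLehnerSet N e}
  mul_mem' := by
    rintro g g' ⟨e, he, hg⟩ ⟨e', he', hg'⟩
    obtain ⟨k, u, v, hk, hu, hv, rfl, rfl, hd⟩ :=
      exists_factor (Nat.pos_of_dvd_of_pos hn hN) he he'
    exact ⟨u * v, (Dvd.intro_left k (by ring)).trans hd, mul_mem hk hu hv (hd.trans hn) hg hg'⟩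
  one_mem' := ⟨1, one_dvd n, mem_one_iff.2 (one_mem _)⟩
  inv_mem' := by
    rintro g ⟨e, he, hg⟩
    exact ⟨e, he, inv_mem (Nat.pos_of_dvd_of_pos (he.trans hn) hN) hg⟩

theorem mem_subgroup {N n : ℕ} {hN : 0 < N} {hn : n ∣ N} {g : SL2R} :
    g ∈ subgroup hN hn ↔ ∃ e, e ∣ n ∧ g ∈ atkinLehnerSet N e := Iff.rfl

theorem gamma0_le_subgroup {N n : ℕ} (hN : 0 < N) (hn : n ∣ N) :
    Gamma0SL2R N ≤ subgroup hN hn := fun _ hg => ⟨1, one_dvd n, mem_one_iff.2 hg⟩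

theorem mem_frickeGroup_iff {N : ℕ} (hN : 0 < N) {g : SL2R} :
    g ∈ FrickeGroup N ↔ ∃ e, e ∣ N ∧ g ∈ atkinLehnerSet N e := by
  rw [← mem_subgroup (hN := hN) (hn := dvd_rfl)]
  constructor
  · refine fun hg => (Subgroup.closure_le (subgroup hN dvd_rfl)).2 ?_ hg
    rintro g (hg | hg)
    · exact gamma0_le_subgroup hN dvd_rfl hg
    · simp only [Set.mem_iUnion] at hg
      obtain ⟨e, he, hg⟩ := hg
      exact ⟨e, he.1, hg⟩
  · rintro ⟨e, he, hg⟩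
    refine Subgroup.subset_closure (Or.inr ?_)
    simp only [Set.mem_iUnion]
    exact ⟨e, ⟨he, coprime_of_mem (Nat.pos_of_dvd_of_pos he hN) he hg⟩, hg⟩

theorem subgroup_le_frickeGroup {N n : ℕ} (hN : 0 < N) (hn : n ∣ N) :
    subgroup hN hn ≤ FrickeGroup N := by
  rintro g ⟨e, he, hg⟩
  exact (mem_frickeGroup_iff hN).2 ⟨e, he.trans hn, hg⟩

theorem gamma0_normal {N n : ℕ} (hN : 0 < N) (hn : n ∣ N) :
    ((Gamma0SL2R N).subgroupOf (subgroup hN hn)).Normal := by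
  constructor
  rintro γ hγ ⟨g, e, he, hg⟩
  rw [Subgroup.mem_subgroupOf, ← mem_one_iff] at hγ ⊢
  have hp := Nat.pos_of_dvd_of_pos (he.trans hn) hN
  have h1 : g * γ.1 ∈ atkinLehnerSet N e := by
    simpa using mul_mem one_pos hp one_pos (by simpa using he.trans hn)
      (by simpa using hg) (by simpa using hγ)
  simpa using mul_mem hp one_pos one_pos (by simpa using he.trans hn)
    (by simpa using h1) (by simpa using inv_mem hp hg)

theorem inv_mul_mem_gamma0_iff {N e : ℕ} (hN : 0 < N) (he : e ∣ N) {g g' : SL2R}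
    (hg : g ∈ atkinLehnerSet N e) : g⁻¹ * g' ∈ Gamma0SL2R N ↔ g' ∈ atkinLehnerSet N e := by
  have hp := Nat.pos_of_dvd_of_pos he hN
  rw [← mem_one_iff]
  constructor <;> intro h
  · have h' := mul_mem one_pos hp one_pos (by simpa using he)
      (by simpa using hg) (by simpa using h)
    rwa [mul_inv_cancel_left, mul_one] at h'
  · simpa using mul_mem hp one_pos one_pos (by simpa using he)
      (by simpa using inv_mem hp hg) (by simpa using h)

theorem index_gamma0 {N n : ℕ} (hN : 0 < N) (hsq : Squarefree N) (hn : n ∣ N) :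
    ((Gamma0SL2R N).subgroupOf (subgroup hN hn)).index = n.divisors.card := by
  have hne : ∀ e : n.divisors, ∃ g, g ∈ atkinLehnerSet N e := fun e => by
    have he := (Nat.dvd_of_mem_divisors e.2).trans hn
    refine nonempty (Nat.pos_of_dvd_of_pos he hN) he (Nat.coprime_of_squarefree_mul ?_)
    rwa [Nat.mul_div_cancel' he]
  choose W hW using hne
  have hW' : ∀ e : n.divisors, W e ∈ subgroup hN hn :=
    fun e => ⟨e, Nat.dvd_of_mem_divisors e.2, hW e⟩
  have hbij : Function.Bijective (fun e : n.divisors =>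
      (QuotientGroup.mk ⟨W e, hW' e⟩ :
        subgroup hN hn ⧸ (Gamma0SL2R N).subgroupOf (subgroup hN hn))) := by
    constructor
    · intro e e' h
      have he := (Nat.dvd_of_mem_divisors e.2).trans hn
      have he' := (Nat.dvd_of_mem_divisors e'.2).trans hn
      have h := QuotientGroup.eq.1 h
      rw [Subgroup.mem_subgroupOf] at h
      exact Subtype.ext (level_unique hN he he'
        ((inv_mul_mem_gamma0_iff hN he (hW e)).1 h) (hW e'))
    · intro q
      obtain ⟨⟨g, e, he, hg⟩, rfl⟩ := QuotientGroup.mk_surjective q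
      refine ⟨⟨e, Nat.mem_divisors.2 ⟨he, (Nat.pos_of_dvd_of_pos hn hN).ne'⟩⟩,
        QuotientGroup.eq.2 ?_⟩
      rw [Subgroup.mem_subgroupOf]
      exact (inv_mul_mem_gamma0_iff hN (he.trans hn) (hW _)).2 hg
  rw [Subgroup.index, ← Nat.card_congr (Equiv.ofBijective _ hbij), Nat.card_eq_fintype_card,
    Fintype.card_coe]

theorem conj_entries (g : SL2R) (M : Matrix (Fin 2) (Fin 2) ℝ) :
    ((g.1)ᵀ * M * g.1) 0 0 = M 0 0 * g.1 0 0 ^ 2 + (M 0 1 + M 1 0) * (g.1 0 0 * g.1 1 0) +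
        M 1 1 * g.1 1 0 ^ 2 ∧
      ((g.1)ᵀ * M * g.1) 0 1 = M 0 0 * g.1 0 0 * g.1 0 1 + M 0 1 * g.1 0 0 * g.1 1 1 +
        M 1 0 * g.1 0 1 * g.1 1 0 + M 1 1 * g.1 1 0 * g.1 1 1 ∧
      ((g.1)ᵀ * M * g.1) 1 0 = M 0 0 * g.1 0 0 * g.1 0 1 + M 1 0 * g.1 0 0 * g.1 1 1 +
        M 0 1 * g.1 0 1 * g.1 1 0 + M 1 1 * g.1 1 0 * g.1 1 1 ∧
      ((g.1)ᵀ * M * g.1) 1 1 = M 0 0 * g.1 0 1 ^ 2 + (M 0 1 + M 1 0) * (g.1 0 1 * g.1 1 1) +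
        M 1 1 * g.1 1 1 ^ 2 := by
  refine ⟨?_, ?_, ?_, ?_⟩ <;>
    simp only [Matrix.mul_apply, Matrix.transpose_apply, Fin.sum_univ_two] <;> ring

theorem exists_formMat_conj {e k : ℕ} (he : 0 < e) {g : SL2R}
    (hg : g ∈ atkinLehnerSet (e * k) e) {a b c : ℤ} (ha : ((e * k : ℕ) : ℤ) ∣ a) :
    ∃ a' b' c' : ℤ, (g.1)ᵀ * formMat a b c * g.1 = formMat a' b' c' ∧
      ((e * k : ℕ) : ℤ) ∣ a' ∧ b' ^ 2 - 4 * a' * c' = b ^ 2 - 4 * a * c ∧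
      2 * (k : ℤ) ∣ b' - b ∧ 2 * (e : ℤ) ∣ b' + b := by
  obtain ⟨x, y, z, w, hg⟩ := hg
  have hdet := det_params he hg
  obtain ⟨hs, hs2, h00, h01, h10, h11⟩ := entries he hg
  obtain ⟨a₁, rfl⟩ := ha
  rw [← eq_div_iff hs.ne'] at h01 h10
  push_cast at h10 ⊢
  refine ⟨e * k * (a₁ * x ^ 2 * e + b * x * z + c * z ^ 2 * k),
    2 * (e * k * a₁) * x * y + b * (x * w * e + y * z * k) + 2 * c * z * w * e * k,
    a₁ * k * y ^ 2 + b * y * w + c * w ^ 2 * e, ?_, dvd_mul_right _ _, ?_, ?_, ?_⟩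
  · obtain ⟨c00, c01, c10, c11⟩ := conj_entries g (formMat (e * k * a₁) b c)
    ext i j
    fin_cases i <;> fin_cases j <;>
      simp only [Fin.zero_eta, Fin.mk_one, c00, c01, c10, c11] <;>
      simp only [formMat, h00, h01, h10, h11, Matrix.of_apply, Matrix.cons_val',
        Matrix.cons_val_zero, Matrix.cons_val_one, Matrix.cons_val_fin_one] <;>
      push_cast <;> generalize Real.sqrt e = s at * <;> rw [← hs2] <;> field_simp <;> ring
  · linear_combination (b ^ 2 - 4 * (e * k * a₁) * c) * (x * w * e - y * z * k + 1) * hdet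
  · exact ⟨e * a₁ * x * y + b * y * z + c * z * w * e, by linear_combination b * hdet⟩
  · exact ⟨k * a₁ * x * y + b * x * w + c * z * w * k, by linear_combination (-b) * hdet⟩

theorem conj_apply_zero_zero_pos (g : SL2R) {M : Matrix (Fin 2) (Fin 2) ℝ}
    (hM : M 1 0 = M 0 1) (h0 : 0 < M 0 0) (hdet : 0 < M.det) :
    0 < ((g.1)ᵀ * M * g.1) 0 0 := by
  rw [Matrix.det_fin_two, hM] at hdet
  rw [(conj_entries g M).1, hM]
  have hd := det_entries g
  refine pos_of_mul_pos_right (a := M 0 0) ?_ h0.le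
  have heq : M 0 0 * (M 0 0 * g.1 0 0 ^ 2 + (M 0 1 + M 0 1) * (g.1 0 0 * g.1 1 0) +
      M 1 1 * g.1 1 0 ^ 2) = (M 0 0 * g.1 0 0 + M 0 1 * g.1 1 0) ^ 2 +
        (M 0 0 * M 1 1 - M 0 1 * M 0 1) * g.1 1 0 ^ 2 := by ring
  rw [heq]
  by_cases h : g.1 1 0 = 0
  · have h' : g.1 0 0 ≠ 0 := by
      intro h'; rw [h, h'] at hd; simp at hd
    rw [h]
    have := mul_ne_zero h0.ne' h'
    simp only [mul_zero, add_zero]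
    positivity
  · positivity

theorem moebius_cmPointC (g : SL2R) {M : Matrix (Fin 2) (Fin 2) ℝ}
    (hM : M 1 0 = M 0 1) (h0 : 0 < M 0 0) (hdet : 0 < M.det) :
    moebius g (cmPointC ((g.1)ᵀ * M * g.1)) = cmPointC M := by
  have hpos := conj_apply_zero_zero_pos g hM h0 hdet
  have hd := det_entries g
  have hdetM : ((g.1)ᵀ * M * g.1).det = M.det := by
    rw [Matrix.det_mul, Matrix.det_mul, Matrix.det_transpose, g.2]; ring
  obtain ⟨c00, c01, -, -⟩ := conj_entries g M
  have hs : 0 < Real.sqrt M.det := Real.sqrt_pos.2 hdet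
  have hs2 : Real.sqrt M.det ^ 2 = M 0 0 * M 1 1 - M 0 1 ^ 2 := by
    rw [Real.sq_sqrt hdet.le, Matrix.det_fin_two, hM]; ring
  rw [hM] at c00 c01
  unfold moebius cmPointC
  rw [hdetM]
  generalize Real.sqrt M.det = s at *
  generalize ((g.1)ᵀ * M * g.1) 0 0 = A' at *
  generalize ((g.1)ᵀ * M * g.1) 0 1 = B' at *
  have hA : (A' : ℂ) ≠ 0 := by exact_mod_cast hpos.ne'
  have hA0 : ((M 0 0 : ℝ) : ℂ) ≠ 0 := by exact_mod_cast h0.ne'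
  have hD : ((g.1 1 0 : ℝ) : ℂ) * (((-B' : ℝ) : ℂ) + Complex.I * (s : ℂ)) +
      ((g.1 1 1 : ℝ) : ℂ) * (A' : ℂ) ≠ 0 := by
    intro h
    have him := congrArg Complex.im h
    have hre := congrArg Complex.re h
    simp at him hre
    have h10 : g.1 1 0 = 0 := him.resolve_right hs.ne'
    have h11 : g.1 1 1 = 0 := by
      rw [h10] at hre; simpa [hpos.ne'] using hre
    rw [h10, h11] at hd
    simp at hd
  have hdC : ((g.1 0 0 : ℝ) : ℂ) * (g.1 1 1 : ℝ) - (g.1 0 1 : ℝ) * (g.1 1 0 : ℝ) = 1 := by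
    exact_mod_cast hd
  have hs2C : (s : ℂ) ^ 2 = (M 0 0 : ℝ) * (M 1 1 : ℝ) - (M 0 1 : ℝ) ^ 2 := by exact_mod_cast hs2
  have hden : ((g.1 1 0 : ℝ) : ℂ) * ((((-B' : ℝ) : ℂ) + Complex.I * (s : ℂ)) / (A' : ℂ)) +
      ((g.1 1 1 : ℝ) : ℂ) ≠ 0 := by
    intro h
    refine hD ?_
    field_simp at h
    linear_combination h
  rw [div_eq_div_iff hden hA0]
  field_simp
  rw [c00, c01]
  push_cast
  linear_combination (-(((M 0 0 : ℝ) * (g.1 0 0 : ℝ) + (M 0 1 : ℝ) * (g.1 1 0 : ℝ)) * Complex.I * s +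
    (g.1 1 0 : ℝ) * ((M 0 0 : ℝ) * (M 1 1 : ℝ) - (M 0 1 : ℝ) ^ 2)) : ℂ) * hdC +
    ((g.1 1 0 : ℝ) : ℂ) * hs2C - ((g.1 1 0 : ℝ) * s ^ 2 : ℂ) * Complex.I_sq

theorem cmPointC_im_pos {M : Matrix (Fin 2) (Fin 2) ℝ} (h0 : 0 < M 0 0) (hdet : 0 < M.det) :
    0 < (cmPointC M).im := by
  unfold cmPointC
  rw [Complex.div_ofReal_im]
  have := Real.sqrt_pos.2 hdet
  refine div_pos ?_ h0
  simpa using this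

theorem pos_of_mem_QdN {d : ℤ} {N : ℕ} (hd : 0 < d) {M : Matrix (Fin 2) (Fin 2) ℝ}
    (hM : M ∈ QdN d N) : M 1 0 = M 0 1 ∧ 0 < M 0 0 ∧ 0 < M.det := by
  obtain ⟨a, b, c, rfl, ha, hdisc, -⟩ := hM
  refine ⟨by simp [formMat], by simpa [formMat] using ha, ?_⟩
  have h1 : (b : ℝ) ^ 2 - 4 * a * c = -d := by exact_mod_cast hdisc
  have h2 : (0 : ℝ) < d := by exact_mod_cast hd
  rw [formMat, Matrix.det_fin_two_of]
  linarith

theorem exists_conj_of_disc {N e : ℕ} (hN : 0 < N) (he : e ∣ N) {g : SL2R}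
    (hg : g ∈ atkinLehnerSet N e) {d : ℤ} (hd : 0 < d) {a b c : ℤ} (ha : 0 < a)
    (hdisc : b ^ 2 - 4 * a * c = -d) (hNa : (N : ℤ) ∣ a) :
    ∃ a' b' c' : ℤ, (g.1)ᵀ * formMat a b c * g.1 = formMat a' b' c' ∧ 0 < a' ∧
      b' ^ 2 - 4 * a' * c' = -d ∧ (N : ℤ) ∣ a' ∧
      2 * ((N / e : ℕ) : ℤ) ∣ b' - b ∧ 2 * (e : ℤ) ∣ b' + b := by
  have hp := Nat.pos_of_dvd_of_pos he hN
  obtain ⟨k, rfl⟩ := he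
  obtain ⟨a', b', c', hM, hNa', hdisc', hk, he'⟩ := exists_formMat_conj (b := b) (c := c) hp hg hNa
  obtain ⟨hs, h0, hdet⟩ := pos_of_mem_QdN hd ⟨a, b, c, rfl, ha, hdisc, hNa⟩
  have hpos := conj_apply_zero_zero_pos g hs h0 hdet
  rw [hM] at hpos
  rw [Nat.mul_div_cancel_left _ hp]
  exact ⟨a', b', c', hM, by simpa [formMat] using hpos, hdisc'.trans hdisc, hNa', hk, he'⟩

theorem QdNh_subset_QdN {d : ℤ} {N : ℕ} {h : ℤ} : QdNh d N h ⊆ QdN d N := by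
  rintro M ⟨a, b, c, hM, ha, hdisc, hNa, -⟩
  exact ⟨a, b, c, hM, ha, hdisc, hNa⟩

theorem two_mul_dvd_of_dvd {N e : ℕ} (hsq : Squarefree N) (he : e ∣ N) {t : ℤ}
    (h1 : 2 * ((N / e : ℕ) : ℤ) ∣ t) (h2 : 2 * (e : ℤ) ∣ t) : ((2 * N : ℕ) : ℤ) ∣ t := by
  have hc : Nat.Coprime (N / e) e := by
    refine (Nat.coprime_of_squarefree_mul ?_)
    rwa [Nat.div_mul_cancel he]
  obtain ⟨u, rfl⟩ := (dvd_mul_right (2 : ℤ) _).trans h1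
  rw [mul_dvd_mul_iff_left two_ne_zero] at h1 h2
  have h := (Nat.isCoprime_iff_coprime.2 hc).mul_dvd h1 h2
  rw [← Nat.cast_mul, Nat.div_mul_cancel he] at h
  push_cast
  exact mul_dvd_mul_left 2 h

theorem conj_mem_QdNh {N : ℕ} (hN : 0 < N) (hsq : Squarefree N) {d : ℤ} (hd : 0 < d) {h : ℤ}
    {g : SL2R} (hg : g ∈ subgroup hN (Nat.gcd_dvd_left N d.toNat))
    {M : Matrix (Fin 2) (Fin 2) ℝ} (hM : M ∈ QdNh d N h) : (g.1)ᵀ * M * g.1 ∈ QdNh d N h := by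
  obtain ⟨e, he, hg⟩ := hg
  obtain ⟨heN, hed⟩ := Nat.dvd_gcd_iff.1 he
  obtain ⟨a, b, c, rfl, ha, hdisc, hNa, hb⟩ := hM
  obtain ⟨a', b', c', hM, ha', hdisc', hNa', hk, he'⟩ :=
    exists_conj_of_disc hN heN hg hd ha hdisc hNa
  refine ⟨a', b', c', hM, ha', hdisc', hNa', ?_⟩
  have hed' : (e : ℤ) ∣ d := by
    have := Int.natCast_dvd_natCast.2 hed
    rwa [Int.toNat_of_nonneg hd.le] at this
  have hea : (e : ℤ) ∣ a := (Int.natCast_dvd_natCast.2 heN).trans hNa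
  have hbe : (e : ℤ) ∣ b := by
    rw [← Squarefree.dvd_pow_iff_dvd
      (Int.squarefree_natCast.2 (hsq.squarefree_of_dvd heN)) two_ne_zero]
    rw [show b ^ 2 = a * (4 * c) - d by linarith]
    exact dvd_sub (hea.mul_right _) hed'
  rw [← hb, ZMod.intCast_eq_intCast_iff_dvd_sub, ← dvd_neg, neg_sub]
  refine two_mul_dvd_of_dvd hsq heN hk ?_
  rw [show b' - b = (b' + b) - 2 * b by ring]
  exact dvd_sub he' (mul_dvd_mul_left 2 hbe)

theorem mem_subgroup_of_conj_mem_QdNh {N : ℕ} (hN : 0 < N) {d : ℤ} (hd : 0 < d) {h : ℤ}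
    {g : SL2R} (hg : g ∈ FrickeGroup N) {M : Matrix (Fin 2) (Fin 2) ℝ} (hM : M ∈ QdNh d N h)
    (hM' : (g.1)ᵀ * M * g.1 ∈ QdNh d N h) :
    g ∈ subgroup hN (Nat.gcd_dvd_left N d.toNat) := by
  obtain ⟨e, heN, hg⟩ := (mem_frickeGroup_iff hN).1 hg
  refine ⟨e, Nat.dvd_gcd heN ?_, hg⟩
  obtain ⟨a, b, c, rfl, ha, hdisc, hNa, hb⟩ := hM
  obtain ⟨a', b', c', hM, ha', hdisc', hNa', hk, he'⟩ :=
    exists_conj_of_disc hN heN hg hd ha hdisc hNa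
  obtain ⟨a₂, b₂, c₂, h₂, -, -, -, hb₂⟩ := hM'
  have hbb : b₂ = b' := by
    have h01 := congrFun (congrFun (h₂.symm.trans hM) 0) 1
    simp only [formMat, Matrix.of_apply, Matrix.cons_val', Matrix.cons_val_zero,
      Matrix.cons_val_one, Matrix.cons_val_fin_one] at h01
    have : (b₂ : ℝ) = b' := by linarith
    exact_mod_cast this
  rw [hbb, ← hb, ZMod.intCast_eq_intCast_iff_dvd_sub] at hb₂
  have h2e : 2 * (e : ℤ) ∣ b - b' := by
    refine Dvd.dvd.trans ?_ hb₂
    push_cast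
    exact mul_dvd_mul_left 2 (Int.natCast_dvd_natCast.2 heN)
  have heb : (e : ℤ) ∣ b := by
    have := dvd_add h2e he'
    rw [show b - b' + (b' + b) = 2 * b by ring] at this
    exact (mul_dvd_mul_iff_left two_ne_zero).1 this
  have hea : (e : ℤ) ∣ a := (Int.natCast_dvd_natCast.2 heN).trans hNa
  rw [← Int.natCast_dvd_natCast, Int.toNat_of_nonneg hd.le,
    show d = a * (4 * c) - b * b by linarith]
  exact dvd_sub (hea.mul_right _) (heb.mul_right _)

theorem exists_conj_mem_QdNh {N : ℕ} (hN : 0 < N) (hsq : Squarefree N) {d : ℤ} (hd : 0 < d)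
    {h : ℤ} (hh : (h : ZMod (4 * N)) ^ 2 = ((-d : ℤ) : ZMod (4 * N)))
    {M : Matrix (Fin 2) (Fin 2) ℝ} (hM : M ∈ QdN d N) :
    ∃ g ∈ FrickeGroup N, (g.1)ᵀ * M * g.1 ∈ QdNh d N h := by
  obtain ⟨a, b, c, rfl, ha, hdisc, a₁, rfl⟩ := hM
  rw [← Int.cast_pow, ZMod.intCast_eq_intCast_iff_dvd_sub] at hh
  obtain ⟨t, ht⟩ := hh
  push_cast at ht
  obtain ⟨u, hu⟩ : (2 : ℤ) ∣ h - b := by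
    have h1 : h ^ 2 - b ^ 2 = 2 * (2 * (-(N * t) - N * a₁ * c)) := by linarith
    have h2 : Even (h ^ 2 - b ^ 2) := even_iff_two_dvd.2 ⟨_, h1⟩
    rw [← even_iff_two_dvd]
    simpa [Int.even_sub, Int.even_pow] using h2
  have huv : u * (u + b) = N * (-t - a₁ * c) := by
    obtain rfl : h = b + 2 * u := by linarith
    linarith
  have hgN : N.gcd u.natAbs ∣ N := Nat.gcd_dvd_left _ _
  have hgpos : 0 < N.gcd u.natAbs := Nat.gcd_pos_of_pos_left _ hN
  obtain ⟨e, heq⟩ := hgN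
  have heN : e ∣ N := Dvd.intro_left _ heq.symm
  have hNe : N / e = N.gcd u.natAbs := by
    have := Nat.pos_of_dvd_of_pos heN hN
    conv_lhs => rw [heq]
    exact Nat.mul_div_cancel _ this
  have hku : ((N / e : ℕ) : ℤ) ∣ u := by
    rw [hNe, Int.natCast_dvd]; exact Nat.gcd_dvd_right _ _
  have hev : (e : ℤ) ∣ u + b := by
    obtain ⟨u', hu'⟩ := Nat.gcd_dvd_right N u.natAbs
    have hcop : Nat.Coprime e u' := by
      have := Nat.coprime_div_gcd_div_gcd hgpos
      rwa [Nat.div_eq_of_eq_mul_right hgpos heq, Nat.div_eq_of_eq_mul_right hgpos hu'] at this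
    have hdv : N ∣ u.natAbs * (u + b).natAbs := by
      rw [← Int.natAbs_mul, ← Int.natCast_dvd]; exact ⟨_, huv⟩
    rw [Int.natCast_dvd]
    refine hcop.dvd_of_dvd_mul_left (Nat.dvd_of_mul_dvd_mul_left hgpos ?_)
    rwa [← heq, ← mul_assoc, ← hu']
  obtain ⟨g, hg⟩ := nonempty (Nat.pos_of_dvd_of_pos heN hN) heN
    (Nat.coprime_of_squarefree_mul (by rwa [Nat.mul_div_cancel' heN]))
  obtain ⟨a', b', c', hM, ha', hdisc', hNa', hk, he'⟩ :=
    exists_conj_of_disc hN heN hg hd ha hdisc (dvd_mul_right _ _)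
  refine ⟨g, (mem_frickeGroup_iff hN).2 ⟨e, heN, hg⟩, a', b', c', hM, ha', hdisc', hNa', ?_⟩
  rw [ZMod.intCast_eq_intCast_iff_dvd_sub]
  refine two_mul_dvd_of_dvd hsq heN ?_ ?_
  · rw [show h - b' = 2 * u - (b' - b) by linarith]
    exact dvd_sub (mul_dvd_mul_left 2 hku) hk
  · rw [show h - b' = 2 * (u + b) - (b' + b) by linarith]
    exact dvd_sub (mul_dvd_mul_left 2 hev) he'

end AtkinLehner

namespace ClassTrace

theorem finsum_eq_mul_finsum {α β : Type*} (π : α → β) (hπ : Function.Surjective π)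
    (F : α → ℂ) (G : β → ℂ) {n : ℂ} (hn : n ≠ 0)
    (hcard : ∀ a, Nat.card {a' // π a' = π a} ≠ 0)
    (hFG : ∀ a, F a * Nat.card {a' // π a' = π a} = n * G (π a)) :
    ∑ᶠ a, F a = n * ∑ᶠ b, G b := by
  have hsupp : ∀ a, F a ≠ 0 ↔ G (π a) ≠ 0 := fun a => by
    have hc : (Nat.card {a' // π a' = π a} : ℂ) ≠ 0 := by exact_mod_cast hcard a
    rw [not_iff_not, ← mul_eq_zero_iff_right hc, hFG, mul_eq_zero_iff_left hn]
  have hpre : Function.support F = π ⁻¹' Function.support G := Set.ext fun a => hsupp a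
  have hfib : ∀ b, (π ⁻¹' {b}).Finite := fun b => by
    obtain ⟨a, rfl⟩ := hπ b
    exact Nat.finite_of_card_ne_zero (hcard a)
  by_cases hG : (Function.support G).Finite
  · have hF : (Function.support F).Finite := by
      rw [hpre]
      exact hG.preimage' fun b _ => hfib b
    classical
    rw [finsum_eq_sum_of_support_toFinset_subset _ hF subset_rfl,
      finsum_eq_sum_of_support_toFinset_subset _ hG subset_rfl, Finset.mul_sum,
      ← Finset.sum_fiberwise_of_maps_to (g := π) (t := hG.toFinset)]
    · refine Finset.sum_congr rfl fun b hb => ?_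
      obtain ⟨a, rfl⟩ := hπ b
      have hconst : ∀ a' ∈ hF.toFinset.filter (fun a' => π a' = π a), F a' = F a := by
        intro a' ha'
        have h := (Finset.mem_filter.1 ha').2
        have hc : (Nat.card {a' // π a' = π a} : ℂ) ≠ 0 := by exact_mod_cast hcard a
        have h1 := hFG a'
        rw [h, ← hFG a] at h1
        exact mul_right_cancel₀ hc h1
      rw [Finset.sum_congr rfl hconst, Finset.sum_const, nsmul_eq_mul, mul_comm, ← hFG a,
        Nat.subtype_card (hF.toFinset.filter (fun a' => π a' = π a))]
      intro a'
      rw [Finset.mem_filter, Set.Finite.mem_toFinset, Function.mem_support, hsupp,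
        and_iff_right_iff_imp]
      intro h
      rw [h]
      exact hG.mem_toFinset.1 hb
    · intro a ha
      simpa [hsupp] using ha
  · have hF : ¬ (Function.support F).Finite := by
      rw [hpre]
      intro h
      exact hG (h.of_preimage hπ)
    rw [finsum_of_infinite_support hF, finsum_of_infinite_support hG, mul_zero]

theorem card_eq_index {G β : Type*} [Group G] (K : Subgroup G) (φ : G → β)
    (hφ : Function.Surjective φ) (h : ∀ g g', φ g = φ g' ↔ g⁻¹ * g' ∈ K) :
    Nat.card β = K.index := by
  refine (Nat.card_congr (Equiv.ofBijective
    (Quotient.lift φ fun g g' hg => (h g g').2 (QuotientGroup.leftRel_apply.1 hg))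
    ⟨?_, ?_⟩)).symm
  · intro p q
    refine Quotient.inductionOn₂ p q fun g g' hg => ?_
    exact QuotientGroup.eq.2 ((h g g').1 hg)
  · intro b
    obtain ⟨g, rfl⟩ := hφ b
    exact ⟨QuotientGroup.mk g, rfl⟩

theorem conj_mul (g g' : SL2R) (M : Matrix (Fin 2) (Fin 2) ℝ) :
    ((g * g').1)ᵀ * M * (g * g').1 = (g'.1)ᵀ * ((g.1)ᵀ * M * g.1) * g'.1 := by
  simp only [Matrix.SpecialLinearGroup.coe_mul, Matrix.transpose_mul, Matrix.mul_assoc]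

theorem conj_one (M : Matrix (Fin 2) (Fin 2) ℝ) :
    ((1 : SL2R).1)ᵀ * M * (1 : SL2R).1 = M := by
  simp

theorem eq_conj_inv_iff (g : SL2R) {M M' : Matrix (Fin 2) (Fin 2) ℝ} :
    M = (g⁻¹.1)ᵀ * M' * g⁻¹.1 ↔ (g.1)ᵀ * M * g.1 = M' := by
  constructor
  · rintro rfl
    rw [← conj_mul, inv_mul_cancel, conj_one]
  · rintro rfl
    rw [← conj_mul, mul_inv_cancel, conj_one]

/-- The stabilizer of `M` under `M ↦ gᵀ M g`. -/
def stab (M : Matrix (Fin 2) (Fin 2) ℝ) : Subgroup SL2R where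
  carrier := {g | (g.1)ᵀ * M * g.1 = M}
  mul_mem' := by
    intro g g' hg hg'
    change ((g * g').1)ᵀ * M * (g * g').1 = M
    rw [conj_mul, hg.out, hg'.out]
  one_mem' := conj_one M
  inv_mem' := fun {g} hg => ((eq_conj_inv_iff g).2 hg).symm

theorem mem_stab {M : Matrix (Fin 2) (Fin 2) ℝ} {g : SL2R} :
    g ∈ stab M ↔ (g.1)ᵀ * M * g.1 = M := Iff.rfl

theorem stabOrder_eq (Γ : Subgroup SL2R) (M : Matrix (Fin 2) (Fin 2) ℝ) :
    stabOrder Γ M = Nat.card (Γ ⊓ stab M : Subgroup SL2R) / 2 := rfl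

theorem stabOrder_conj {Γ : Subgroup SL2R} {g : SL2R} (hg : g ∈ Γ)
    (M : Matrix (Fin 2) (Fin 2) ℝ) : stabOrder Γ ((g.1)ᵀ * M * g.1) = stabOrder Γ M := by
  have hmap : (Γ ⊓ stab ((g.1)ᵀ * M * g.1)).map (MulAut.conj g).toMonoidHom = Γ ⊓ stab M := by
    ext γ
    constructor
    · rintro ⟨γ, ⟨hγ, hs⟩, rfl⟩
      refine ⟨Γ.mul_mem (Γ.mul_mem hg hγ) (Γ.inv_mem hg), ?_⟩
      change ((g * γ * g⁻¹).1)ᵀ * M * (g * γ * g⁻¹).1 = M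
      rw [conj_mul, eq_comm, eq_conj_inv_iff, conj_mul]
      exact (mem_stab.1 hs).symm
    · rintro ⟨hγ, hs⟩
      refine ⟨g⁻¹ * γ * g, ⟨Γ.mul_mem (Γ.mul_mem (Γ.inv_mem hg) hγ) hg, ?_⟩, ?_⟩
      · change ((g⁻¹ * γ * g).1)ᵀ * ((g.1)ᵀ * M * g.1) * (g⁻¹ * γ * g).1 = (g.1)ᵀ * M * g.1
        rw [← conj_mul, show g * (g⁻¹ * γ * g) = γ * g by group, conj_mul, mem_stab.1 hs]
      · simp [mul_assoc]
  rw [stabOrder_eq, stabOrder_eq, ← hmap]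
  congr 1
  exact (Nat.card_congr (Subgroup.equivMapOfInjective _ _ (MulAut.conj g).injective).toEquiv)

theorem two_dvd_card_stab (N : ℕ) (M : Matrix (Fin 2) (Fin 2) ℝ) :
    2 ∣ Nat.card (Gamma0SL2R N ⊓ stab M : Subgroup SL2R) := by
  have hmem : (-1 : SL2R) ∈ Gamma0SL2R N ⊓ stab M := by
    refine ⟨Subgroup.mem_map.2 ⟨-1, by simp [CongruenceSubgroup.Gamma0_mem], ?_⟩, ?_⟩
    · ext i j
      simp
    · simp [mem_stab]
  have horder : orderOf (⟨-1, hmem⟩ : (Gamma0SL2R N ⊓ stab M : Subgroup SL2R)) = 2 := by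
    refine orderOf_eq_prime (Subtype.ext (by simp)) fun h => ?_
    have h00 := congrArg (fun g : SL2R => g.1 0 0) (congrArg Subtype.val h)
    norm_num at h00
  have hdvd := orderOf_dvd_natCard (⟨-1, hmem⟩ : (Gamma0SL2R N ⊓ stab M : Subgroup SL2R))
  rwa [horder] at hdvd

theorem formRel_equivalence (Γ : Subgroup SL2R) (S : Set (Matrix (Fin 2) (Fin 2) ℝ)) :
    Equivalence (formRel Γ S) where
  refl Q := ⟨1, Γ.one_mem, (conj_one _).symm⟩
  symm := by
    rintro Q Q' ⟨g, hg, h⟩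
    exact ⟨g⁻¹, Γ.inv_mem hg, (eq_conj_inv_iff g).2 h.symm⟩
  trans := by
    rintro Q Q' Q'' ⟨g, hg, h⟩ ⟨g', hg', h'⟩
    exact ⟨g * g', Γ.mul_mem hg hg', by rw [conj_mul, ← h, h']⟩

theorem mk_eq_mk_iff {Γ : Subgroup SL2R} {S : Set (Matrix (Fin 2) (Fin 2) ℝ)} {Q Q' : S} :
    Quot.mk (formRel Γ S) Q = Quot.mk (formRel Γ S) Q' ↔
      ∃ g ∈ Γ, Q'.1 = (g.1)ᵀ * Q.1 * g.1 := by
  rw [Quot.eq, (formRel_equivalence Γ S).eqvGen_iff]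
  rfl

/-- Comparison of traces for `Γ₀ ≤ H ≤ Γ`, where `Γ₀` is normal of finite index in `H`, every
`Γ`-orbit in `T` meets `S ⊆ T`, and the elements of `Γ` relating two members of `S` are those
of `H`. -/
theorem classTrace_eq_index_mul {Γ₀ H Γ : Subgroup SL2R} (h₀ : Γ₀ ≤ H) (hHΓ : H ≤ Γ)
    (hnormal : (Γ₀.subgroupOf H).Normal) (hindex : (Γ₀.subgroupOf H).index ≠ 0)
    {S T : Set (Matrix (Fin 2) (Fin 2) ℝ)} (hST : S ⊆ T)
    (hS : ∀ g ∈ H, ∀ M ∈ S, (g.1)ᵀ * M * g.1 ∈ S)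
    (hmem : ∀ g ∈ Γ, ∀ M ∈ S, (g.1)ᵀ * M * g.1 ∈ S → g ∈ H)
    (hmeet : ∀ M ∈ T, ∃ g ∈ Γ, (g.1)ᵀ * M * g.1 ∈ S)
    (heven : ∀ M, 2 ∣ Nat.card (Γ₀ ⊓ stab M : Subgroup SL2R))
    {f : ℂ → ℂ} (hf : ∀ g ∈ Γ, ∀ M ∈ T, f (cmPointC ((g.1)ᵀ * M * g.1)) = f (cmPointC M)) :
    classTrace Γ₀ f S = (Γ₀.subgroupOf H).index * classTrace Γ f T := by
  have hle : ∀ Q Q' : S, formRel Γ₀ S Q Q' →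
      formRel Γ T (Set.inclusion hST Q) (Set.inclusion hST Q') := by
    rintro Q Q' ⟨g, hg, h⟩
    exact ⟨g, hHΓ (h₀ hg), h⟩
  have hfiber : ∀ a : Quot (formRel Γ₀ S),
      Nat.card {a' // Quot.map _ hle a' = Quot.map _ hle a} *
        Γ₀.relIndex (H ⊓ stab (Quot.out a).1) = (Γ₀.subgroupOf H).index := by
    intro a
    set Q := Quot.out a with hQ
    have ha : a = Quot.mk _ Q := (Quot.out_eq a).symm
    have hle' : H ⊓ stab Q.1 ≤ H := inf_le_left
    rw [ha, ← Subgroup.relIndex_subgroupOf hle', ← Subgroup.relIndex_sup_left,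
      ← Subgroup.relIndex_mul_index (le_sup_left (b := (H ⊓ stab Q.1).subgroupOf H)), mul_comm]
    congr 1
    refine card_eq_index _ (fun g : H => (⟨Quot.mk _ ⟨_, hS _ (H.inv_mem g.2) Q.1 Q.2⟩,
      mk_eq_mk_iff.2 ⟨g.1, hHΓ g.2, ?_⟩⟩ :
        {a' // Quot.map _ hle a' = Quot.map _ hle (Quot.mk _ Q)})) ?_ ?_
    · exact ((eq_conj_inv_iff g.1).1 rfl).symm
    · rintro ⟨⟨Q'⟩, hQ'⟩
      obtain ⟨g, hg, h⟩ := mk_eq_mk_iff.1 hQ'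
      change Q.1 = (g.1)ᵀ * Q'.1 * g.1 at h
      refine ⟨⟨g, hmem g hg Q'.1 Q'.2 (h ▸ Q.2)⟩, Subtype.ext (congrArg (Quot.mk _) ?_)⟩
      exact Subtype.ext ((eq_conj_inv_iff g).2 h.symm).symm
    · intro g g'
      refine Subtype.ext_iff.trans (mk_eq_mk_iff.trans ?_)
      have hstab : ∀ γ : SL2R, (g'.1⁻¹.1)ᵀ * Q.1 * g'.1⁻¹.1 =
          (γ.1)ᵀ * ((g.1⁻¹.1)ᵀ * Q.1 * g.1⁻¹.1) * γ.1 ↔ g.1⁻¹ * γ * g'.1 ∈ stab Q.1 := by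
        intro γ
        rw [eq_comm, ← conj_mul, eq_conj_inv_iff, ← conj_mul, mem_stab]
      rw [Subgroup.mem_sup_of_normal_left]
      constructor
      · rintro ⟨γ, hγ, h⟩
        refine ⟨g⁻¹ * ⟨γ, h₀ hγ⟩⁻¹ * g, ?_, g⁻¹ * ⟨γ, h₀ hγ⟩ * g', ?_, by group⟩
        · exact hnormal.conj_mem' _ (Subgroup.mem_subgroupOf.2 (Γ₀.inv_mem hγ)) _
        · exact Subgroup.mem_subgroupOf.2 ⟨SetLike.coe_mem _, (hstab γ).1 h⟩
      · rintro ⟨ν, hν, s, hs, h⟩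
        refine ⟨(g * ν⁻¹ * g⁻¹ : H), Subgroup.mem_subgroupOf.1
          (hnormal.conj_mem _ (Subgroup.inv_mem _ hν) g), (hstab _).2 ?_⟩
        have hs' : g⁻¹ * (g * ν⁻¹ * g⁻¹) * g' = s := by
          rw [eq_inv_mul_of_mul_eq h]
          group
        have hmem' := (Subgroup.mem_subgroupOf.1 hs).2
        rwa [← hs'] at hmem'
  refine finsum_eq_mul_finsum (Quot.map _ hle) ?_ _ _ (by exact_mod_cast hindex) ?_ ?_
  · rintro ⟨M⟩
    obtain ⟨g, hg, h⟩ := hmeet M.1 M.2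
    exact ⟨Quot.mk _ ⟨_, h⟩, Eq.symm (mk_eq_mk_iff.2 ⟨g, hg, rfl⟩)⟩
  · intro a h
    exact hindex (by rw [← hfiber a, h, zero_mul])
  · intro a
    have hfib := hfiber a
    obtain ⟨g, hg, hout⟩ : ∃ g ∈ Γ, (Quot.out (Quot.map _ hle a)).1 =
        (g.1)ᵀ * (Quot.out a).1 * g.1 := by
      refine mk_eq_mk_iff (Q := Set.inclusion hST (Quot.out a)) |>.1 ?_
      rw [Quot.out_eq]
      conv_rhs => rw [← Quot.out_eq a]
      rfl
    rw [hout, stabOrder_conj hg, hf g hg _ (hST (Quot.out a).2)]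
    generalize Nat.card {a' // Quot.map _ hle a' = Quot.map _ hle a} = m at *
    have hM := (Quot.out a).2
    generalize (Quot.out a).1 = M at *
    have hΓ : Γ ⊓ stab M = H ⊓ stab M := by
      refine le_antisymm (fun γ hγ => ⟨hmem γ hγ.1 M hM ?_, hγ.2⟩) (inf_le_inf_right _ hHΓ)
      rwa [mem_stab.1 hγ.2]
    have hcard : Nat.card (Γ₀ ⊓ stab M : Subgroup SL2R) * Γ₀.relIndex (H ⊓ stab M) =
        Nat.card (Γ ⊓ stab M : Subgroup SL2R) := by
      have h := Subgroup.relIndex_inf_mul_relIndex ⊥ Γ₀ (H ⊓ stab M)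
      rw [hΓ]
      rwa [bot_inf_eq, Subgroup.relIndex_bot_left, Subgroup.relIndex_bot_left, ← inf_assoc,
        inf_eq_left.2 h₀] at h
    obtain ⟨s, hs⟩ := heven M
    rw [stabOrder_eq, stabOrder_eq, ← hcard, hs, mul_assoc, Nat.mul_div_cancel_left _ two_pos,
      Nat.mul_div_cancel_left _ two_pos, ← hfib]
    have hk : Γ₀.relIndex (H ⊓ stab M) ≠ 0 := fun h => hindex (by rw [← hfib, h, mul_zero])
    have hk' : (Γ₀.relIndex (H ⊓ stab M) : ℂ) ≠ 0 := by exact_mod_cast hk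
    push_cast
    rcases eq_or_ne s 0 with rfl | hs0
    · simp
    · have hs' : (s : ℂ) ≠ 0 := by exact_mod_cast hs0
      field_simp

end ClassTrace

theorem Nat.card_divisors_of_squarefree {n : ℕ} (hn : Squarefree n) :
    n.divisors.card = 2 ^ n.primeFactors.card := by
  rw [Nat.card_divisors hn.ne_zero, Finset.prod_congr rfl (g := fun _ => 2), Finset.prod_const]
  intro p hp
  rw [Nat.factorization_eq_one_of_squarefree hn (Nat.prime_of_mem_primeFactors hp)
    (Nat.dvd_of_mem_primeFactors hp)]

/-- **Lemma 4.2.** For `N ∈ {2,3,5,6,7,10,13}` and a weakly holomorphic modular function `f`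
on `Γ₀*(N)`: for every `d > 0` and every `h` with `h² ≡ -d (mod 4N)`,
`t_f^{(h)}(d) = 2^{μ_N(d)} t_f^*(d)`; in particular `t_f^{(h)}(d)` does not depend on `h`. -/
theorem trace_gamma0_eq_pow_two_mul_trace_fricke (N : ℕ)
    (hN : N ∈ ({2, 3, 5, 6, 7, 10, 13} : Set ℕ))
    (f : ℂ → ℂ) (hf : IsWeaklyHolModularFn (FrickeGroup N) f)
    (d : ℤ) (hd : 0 < d) (h : ℤ)
    (hh : (h : ZMod (4 * N)) ^ 2 = ((-d : ℤ) : ZMod (4 * N))) :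
    classTrace (Gamma0SL2R N) f (QdNh d N h) =
      2 ^ ((Nat.gcd N d.toNat).primeFactors.card) * classTrace (FrickeGroup N) f (QdN d N) := by
  have hN0 : 0 < N := by
    rcases hN with rfl | rfl | rfl | rfl | rfl | rfl | rfl <;> norm_num
  have hsq : Squarefree N := by
    intro x hx
    have hx3 : x ≤ 3 := by
      have hle := Nat.le_of_dvd hN0 hx
      rcases hN with rfl | rfl | rfl | rfl | rfl | rfl | rfl <;> nlinarith
    rw [Nat.isUnit_iff]
    rcases hN with rfl | rfl | rfl | rfl | rfl | rfl | rfl <;> interval_cases x <;> omega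
  have hgcd := Nat.gcd_dvd_left N d.toNat
  have hindex : ((Gamma0SL2R N).subgroupOf (AtkinLehner.subgroup hN0 hgcd)).index =
      2 ^ (Nat.gcd N d.toNat).primeFactors.card := by
    rw [AtkinLehner.index_gamma0 hN0 hsq hgcd,
      Nat.card_divisors_of_squarefree (hsq.squarefree_of_dvd hgcd)]
  rw [ClassTrace.classTrace_eq_index_mul (AtkinLehner.gamma0_le_subgroup hN0 hgcd)
    (AtkinLehner.subgroup_le_frickeGroup hN0 hgcd) (AtkinLehner.gamma0_normal hN0 hgcd)
    (by rw [hindex]; positivity) AtkinLehner.QdNh_subset_QdN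
    (fun g hg M hM => AtkinLehner.conj_mem_QdNh hN0 hsq hd hg hM)
    (fun g hg M hM hM' => AtkinLehner.mem_subgroup_of_conj_mem_QdNh hN0 hd hg hM hM')
    (fun M hM => AtkinLehner.exists_conj_mem_QdNh hN0 hsq hd hh hM)
    (ClassTrace.two_dvd_card_stab N) (fun g hg M hM => ?_), hindex]
  · push_cast
    rfl
  · obtain ⟨hs, h0, hdet⟩ := AtkinLehner.pos_of_mem_QdN hd hM
    rw [← AtkinLehner.moebius_cmPointC g hs h0 hdet]
    refine (hf.2.1 g hg _ (AtkinLehner.cmPointC_im_pos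
      (AtkinLehner.conj_apply_zero_zero_pos g hs h0 hdet) ?_)).symm
    rwa [Matrix.det_mul, Matrix.det_mul, Matrix.det_transpose, g.2, one_mul, mul_one]
end

section
/- Let p be a prime, d a positive integer with p ∤ d, and h an integer mod 2p with h² ≡ -d (mod 4p). Then the inclusion 𝒬_{d,p,h} ⊂ 𝒬_{d,p} induces a bijection 𝒬_{d,p,h}/Γ₀(p) → 𝒬_{d,p}/Γ₀*(p), and this bijection preserves the orders of the stabilizers in Γ₀(p)/{±I} and Γ₀*(p)/{±I} respectively. -/
open Complex Matrix

/-- Every element of `Γ₀(N)`, written out in integer entries. -/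
lemma mem_Gamma0SL2R_iff {N : ℕ} {g : SL2R} :
    g ∈ Gamma0SL2R N ↔
      ∃ x y z w : ℤ, g.1 = !![(x : ℝ), (y : ℝ); (z : ℝ) * N, (w : ℝ)] := by
  constructor
  · rintro ⟨γ, hγ, rfl⟩
    obtain ⟨z, hz⟩ := (ZMod.intCast_zmod_eq_zero_iff_dvd _ _).1
      (CongruenceSubgroup.Gamma0_mem.1 hγ)
    refine ⟨γ.1 0 0, γ.1 0 1, z, γ.1 1 1, ?_⟩
    have hz' : ((γ.1 1 0 : ℤ) : ℝ) = z * N := by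
      rw [hz]; push_cast; ring
    ext i j
    fin_cases i <;> fin_cases j <;> simp [hz']
  · rintro ⟨x, y, z, w, hg⟩
    have hdet := g.2
    rw [hg, Matrix.det_fin_two_of] at hdet
    have hdet' : x * w - y * (z * N) = 1 := by exact_mod_cast hdet
    obtain ⟨γ, hγ⟩ : ∃ γ : Matrix.SpecialLinearGroup (Fin 2) ℤ, γ.1 = !![x, y; z * N, w] :=
      ⟨⟨_, by rw [Matrix.det_fin_two_of]; exact hdet'⟩, rfl⟩
    refine ⟨γ, ?_, ?_⟩
    · exact CongruenceSubgroup.Gamma0_mem.2 (by simp [hγ])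
    · apply Subtype.ext
      rw [hg, Matrix.SpecialLinearGroup.map_apply_coe, hγ]
      ext i j
      fin_cases i <;> fin_cases j <;> simp

lemma Gamma0SL2R_le_FrickeGroup (N : ℕ) : Gamma0SL2R N ≤ FrickeGroup N :=
  fun _ hg => Subgroup.subset_closure (Or.inl hg)

lemma atkinLehnerSet_self_subset_FrickeGroup {N : ℕ} (hN : 0 < N) :
    atkinLehnerSet N N ⊆ FrickeGroup N := fun _ hg =>
  Subgroup.subset_closure <| Or.inr <| Set.mem_biUnion
    (show N ∈ {e : ℕ | e ∣ N ∧ Nat.Coprime e (N / e)} by simp [Nat.div_self hN]) hg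

lemma atkinLehnerSet_one_subset (N : ℕ) : atkinLehnerSet N 1 ⊆ Gamma0SL2R N := by
  rintro g ⟨x, y, z, w, hg⟩
  exact mem_Gamma0SL2R_iff.2 ⟨x, y, z, w, by simpa using hg⟩

lemma mul_mem_atkinLehnerSet_of_left {N : ℕ} {g k : SL2R} (hg : g ∈ Gamma0SL2R N)
    (hk : k ∈ atkinLehnerSet N N) : g * k ∈ atkinLehnerSet N N := by
  obtain ⟨x, y, z, w, hg⟩ := mem_Gamma0SL2R_iff.1 hg
  obtain ⟨x', y', z', w', hk⟩ := hk
  refine ⟨x * x' + y * z', x * y' + y * w' * N, z * N * x' + w * z', z * y' + w * w', ?_⟩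
  rw [Matrix.SpecialLinearGroup.coe_mul, hg, hk, Matrix.mul_smul]
  congr 1
  ext i j
  fin_cases i <;> fin_cases j <;> simp [Matrix.mul_apply, Fin.sum_univ_two] <;> ring

lemma mul_mem_atkinLehnerSet_of_right {N : ℕ} {g k : SL2R} (hg : g ∈ atkinLehnerSet N N)
    (hk : k ∈ Gamma0SL2R N) : g * k ∈ atkinLehnerSet N N := by
  obtain ⟨x, y, z, w, hg⟩ := hg
  obtain ⟨x', y', z', w', hk⟩ := mem_Gamma0SL2R_iff.1 hk
  refine ⟨x * x' + y * z', x * N * y' + y * w', z * x' + w * z' * N, z * y' + w * w', ?_⟩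
  rw [Matrix.SpecialLinearGroup.coe_mul, hg, hk, Matrix.smul_mul]
  congr 1
  ext i j
  fin_cases i <;> fin_cases j <;> simp [Matrix.mul_apply, Fin.sum_univ_two] <;> ring

lemma inv_sqrt_mul_inv_sqrt_mul {N : ℕ} (hN : 0 < N) (r : ℝ) :
    (Real.sqrt N)⁻¹ * ((Real.sqrt N)⁻¹ * (N * r)) = r := by
  have hN' : (0 : ℝ) < N := by exact_mod_cast hN
  rw [← mul_assoc, ← mul_assoc, ← mul_inv, Real.mul_self_sqrt hN'.le,
    inv_mul_cancel₀ hN'.ne', one_mul]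

lemma mul_mem_Gamma0SL2R_of_atkinLehnerSet {N : ℕ} (hN : 0 < N) {g k : SL2R}
    (hg : g ∈ atkinLehnerSet N N) (hk : k ∈ atkinLehnerSet N N) : g * k ∈ Gamma0SL2R N := by
  obtain ⟨x, y, z, w, hg⟩ := hg
  obtain ⟨x', y', z', w', hk⟩ := hk
  refine mem_Gamma0SL2R_iff.2 ⟨x * x' * N + y * z', x * y' + y * w', z * x' + w * z',
    z * y' + w * w' * N, ?_⟩
  rw [Matrix.SpecialLinearGroup.coe_mul, hg, hk, Matrix.smul_mul, Matrix.mul_smul]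
  ext i j
  simp only [Matrix.smul_apply, smul_eq_mul]
  refine Eq.trans ?_ (inv_sqrt_mul_inv_sqrt_mul hN _)
  congr 2
  fin_cases i <;> fin_cases j <;> simp [Matrix.mul_apply, Fin.sum_univ_two] <;> ring

lemma inv_mem_atkinLehnerSet {N : ℕ} {g : SL2R} (hg : g ∈ atkinLehnerSet N N) :
    g⁻¹ ∈ atkinLehnerSet N N := by
  obtain ⟨x, y, z, w, hg⟩ := hg
  refine ⟨w, -y, -z, x, ?_⟩
  rw [Matrix.SpecialLinearGroup.coe_inv, hg, Matrix.adjugate_fin_two]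
  ext i j
  fin_cases i <;> fin_cases j <;> simp

/-- At prime level the Fricke group is `Γ₀(p)` together with its Atkin–Lehner coset. -/
lemma mem_Gamma0SL2R_or_mem_atkinLehnerSet {p : ℕ} (hp : p.Prime) {g : SL2R}
    (hg : g ∈ FrickeGroup p) : g ∈ Gamma0SL2R p ∨ g ∈ atkinLehnerSet p p := by
  induction hg using Subgroup.closure_induction with
  | mem g hg =>
    rcases hg with hg | hg
    · exact Or.inl hg
    · obtain ⟨e, ⟨he, -⟩, hg⟩ := Set.mem_iUnion₂.1 hg
      rcases (Nat.dvd_prime hp).1 he with rfl | rfl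
      · exact Or.inl (atkinLehnerSet_one_subset p hg)
      · exact Or.inr hg
  | one => exact Or.inl (one_mem _)
  | mul g k _ _ hg hk =>
    rcases hg with hg | hg <;> rcases hk with hk | hk
    · exact Or.inl (mul_mem hg hk)
    · exact Or.inr (mul_mem_atkinLehnerSet_of_left hg hk)
    · exact Or.inr (mul_mem_atkinLehnerSet_of_right hg hk)
    · exact Or.inl (mul_mem_Gamma0SL2R_of_atkinLehnerSet hp.pos hg hk)
  | inv g _ hg => exact hg.imp inv_mem inv_mem_atkinLehnerSet

lemma formRel_equivalence (Γ : Subgroup SL2R) (S : Set (Matrix (Fin 2) (Fin 2) ℝ)) :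
    Equivalence (formRel Γ S) where
  refl _ := ⟨1, one_mem _, by simp⟩
  symm := by
    rintro Q Q' ⟨g, hg, h⟩
    refine ⟨g⁻¹, inv_mem hg, ?_⟩
    have hr : g.1 * (g⁻¹).1 = 1 := by
      rw [← Matrix.SpecialLinearGroup.coe_mul, mul_inv_cancel, Matrix.SpecialLinearGroup.coe_one]
    have hl : ((g⁻¹).1)ᵀ * (g.1)ᵀ = 1 := by
      rw [← Matrix.transpose_mul, hr, Matrix.transpose_one]
    calc Q.1 = (((g⁻¹).1)ᵀ * (g.1)ᵀ) * Q.1 * (g.1 * (g⁻¹).1) := by rw [hl, hr]; simp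
      _ = ((g⁻¹).1)ᵀ * Q'.1 * (g⁻¹).1 := by rw [h]; simp only [Matrix.mul_assoc]
  trans := by
    rintro Q Q' Q'' ⟨g, hg, h⟩ ⟨k, hk, h'⟩
    refine ⟨g * k, mul_mem hg hk, ?_⟩
    rw [h', h, Matrix.SpecialLinearGroup.coe_mul, Matrix.transpose_mul]
    simp only [Matrix.mul_assoc]

lemma QdNh_subset_QdN (d : ℤ) (N : ℕ) (h : ℤ) : QdNh d N h ⊆ QdN d N := by
  rintro M ⟨a, b, c, hM, ha, hdisc, hN, -⟩
  exact ⟨a, b, c, hM, ha, hdisc, hN⟩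

/-- An Atkin–Lehner matrix negates the middle coefficient modulo `2N`. -/
lemma atkinLehnerSet_middle_coeff {N : ℕ} (hN : 0 < N) {g : SL2R} (hg : g ∈ atkinLehnerSet N N)
    {a b c a' b' c' : ℤ} (ha : (N : ℤ) ∣ a)
    (h : formMat a' b' c' = (g.1)ᵀ * formMat a b c * g.1) : (2 * N : ℤ) ∣ b + b' := by
  obtain ⟨x, y, z, w, hg⟩ := hg
  obtain ⟨k, rfl⟩ := ha
  have hdet := g.2
  rw [hg, Matrix.det_smul, Matrix.det_fin_two_of, Fintype.card_fin, pow_two, mul_assoc,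
    show (x : ℝ) * N * (w * N) - y * (z * N) = N * (x * w * N - y * z) by ring,
    inv_sqrt_mul_inv_sqrt_mul hN] at hdet
  have hdet' : x * w * N - y * z = 1 := by exact_mod_cast hdet
  have hb : (b' : ℝ) / 2 = N * k * x * y + b / 2 * (x * w * N + y * z) + c * z * w * N := by
    have h01 := congrFun (congrFun h 0) 1
    rw [hg, Matrix.transpose_smul, Matrix.smul_mul, Matrix.smul_mul, Matrix.mul_smul] at h01
    simp only [Matrix.smul_apply, smul_eq_mul] at h01
    rw [← inv_sqrt_mul_inv_sqrt_mul hN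
      ((N : ℝ) * k * x * y + b / 2 * (x * w * N + y * z) + c * z * w * N)]
    refine Eq.trans (by simp [formMat]) (h01.trans ?_)
    congr 2
    simp [formMat, Matrix.mul_apply, Fin.sum_univ_two]
    ring
  have hb' : b' = 2 * (N * k * x * y) + b * (x * w * N + y * z) + 2 * (c * z * w * N) := by
    have : (b' : ℝ) =
        2 * (N * k * x * y) + b * (x * w * N + y * z) + 2 * (c * z * w * N) := by linarith
    exact_mod_cast this
  refine ⟨k * x * y + b * x * w + c * z * w, ?_⟩
  rw [hb']
  linear_combination (-b) * hdet'

/-- An element of the Fricke group carrying one form of `𝒬_{d,p,h}` to another lies in `Γ₀(p)`. -/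
lemma mem_Gamma0SL2R_of_maps_QdNh {p : ℕ} (hp : p.Prime) {d h : ℤ} (hpd : ¬ (p : ℤ) ∣ d)
    {Q Q' : Matrix (Fin 2) (Fin 2) ℝ} (hQ : Q ∈ QdNh d p h) (hQ' : Q' ∈ QdNh d p h)
    {g : SL2R} (hg : g ∈ FrickeGroup p) (hgQ : Q' = (g.1)ᵀ * Q * g.1) :
    g ∈ Gamma0SL2R p := by
  refine (mem_Gamma0SL2R_or_mem_atkinLehnerSet hp hg).resolve_right fun hAL => hpd ?_
  obtain ⟨a, b, c, rfl, -, hdisc, ha, hb⟩ := hQ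
  obtain ⟨a', b', c', rfl, -, -, -, hb'⟩ := hQ'
  have hsum := atkinLehnerSet_middle_coeff hp.pos hAL ha hgQ
  have hdiff := (ZMod.intCast_eq_intCast_iff_dvd_sub _ _ _).1 (hb.trans hb'.symm)
  push_cast at hdiff
  have hpb : (p : ℤ) ∣ b := by
    have h2 : (2 * p : ℤ) ∣ 2 * b := by
      have := dvd_sub hsum hdiff
      rwa [show b + b' - (b' - b) = 2 * b by ring] at this
    exact (mul_dvd_mul_iff_left two_ne_zero).1 h2
  have : d = 4 * a * c - b ^ 2 := by linarith
  rw [this]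
  exact dvd_sub (Dvd.dvd.mul_right (Dvd.dvd.mul_left ha 4) c) (dvd_pow hpb two_ne_zero)

/-- The Fricke involution `W_N`. -/
noncomputable def frickeInvolution (N : ℕ) (hN : 0 < N) : SL2R :=
  ⟨(Real.sqrt N)⁻¹ • !![0, -1; (N : ℝ), 0], by
    have h := inv_sqrt_mul_inv_sqrt_mul hN 1
    rw [Matrix.det_smul, Matrix.det_fin_two_of, Fintype.card_fin, pow_two, mul_assoc]
    simpa using h⟩

lemma frickeInvolution_mem_FrickeGroup {N : ℕ} (hN : 0 < N) :
    frickeInvolution N hN ∈ FrickeGroup N :=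
  atkinLehnerSet_self_subset_FrickeGroup hN ⟨0, -1, 1, 0, by simp [frickeInvolution]⟩

lemma formMat_frickeInvolution {N : ℕ} (hN : 0 < N) (k b c : ℤ) :
    formMat (c * N) (-b) k =
      ((frickeInvolution N hN).1)ᵀ * formMat (N * k) b c * (frickeInvolution N hN).1 := by
  rw [frickeInvolution, Matrix.transpose_smul, Matrix.smul_mul, Matrix.smul_mul, Matrix.mul_smul]
  ext i j
  simp only [Matrix.smul_apply, smul_eq_mul]
  rw [← inv_sqrt_mul_inv_sqrt_mul hN (formMat (c * N) (-b) k i j)]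
  congr 2
  fin_cases i <;> fin_cases j <;>
    simp [formMat, Matrix.mul_apply, Fin.sum_univ_two] <;> ring

/-- If `b² ≡ h² (mod 4p)` then `b ≡ ±h (mod 2p)`. -/
lemma two_mul_dvd_sub_or_add {p : ℕ} (hp : p.Prime) {b h : ℤ}
    (H : (4 * p : ℤ) ∣ b ^ 2 - h ^ 2) : (2 * p : ℤ) ∣ h - b ∨ (2 * p : ℤ) ∣ h + b := by
  have hpar : Even (h - b) := by
    have h2 : Even (b ^ 2 - h ^ 2) :=
      even_iff_two_dvd.2 ((Dvd.intro (2 * p : ℤ) (by ring)).trans H)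
    simp only [Int.even_sub, Int.even_pow' two_ne_zero] at h2 ⊢
    exact h2.symm
  obtain ⟨m, hm⟩ := even_iff_two_dvd.1 hpar
  have hadd : h + b = 2 * (m + b) := by linarith
  have key : (p : ℤ) ∣ m * (m + b) := by
    have h4 : (4 * p : ℤ) ∣ 4 * (m * (m + b)) := by
      rw [← dvd_neg, show -(4 * (m * (m + b))) = b ^ 2 - h ^ 2 by
        rw [show b ^ 2 - h ^ 2 = -((h - b) * (h + b)) by ring, hadd, hm]; ring]
      exact H
    exact (mul_dvd_mul_iff_left four_ne_zero).1 h4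
  rw [hm, hadd]
  exact ((Nat.prime_iff_prime_int.1 hp).dvd_or_dvd key).imp
    (mul_dvd_mul_left 2) (mul_dvd_mul_left 2)

/-- Every form of `𝒬_{d,p}` is equivalent under the Fricke group to one of `𝒬_{d,p,h}`. -/
lemma exists_formRel_mem_QdNh {p : ℕ} (hp : p.Prime) {d h : ℤ} (hd : 0 < d)
    (hh : (h : ZMod (4 * p)) ^ 2 = ((-d : ℤ) : ZMod (4 * p))) (Q : QdN d p) :
    ∃ Q' : QdN d p, Q'.1 ∈ QdNh d p h ∧ formRel (FrickeGroup p) (QdN d p) Q Q' := by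
  obtain ⟨M, hM⟩ := Q
  have hM' := hM
  obtain ⟨a, b, c, rfl, ha, hdisc, ⟨k, rfl⟩⟩ := hM'
  have hdvd : (4 * p : ℤ) ∣ b ^ 2 - h ^ 2 := by
    have h1 : (4 * p : ℤ) ∣ -d - h ^ 2 := by
      have := (ZMod.intCast_eq_intCast_iff_dvd_sub (h ^ 2) (-d) (4 * p)).1 (by exact_mod_cast hh)
      exact_mod_cast this
    have h2 : b ^ 2 - h ^ 2 = (-d - h ^ 2) + 4 * p * (k * c) := by linear_combination hdisc
    rw [h2]
    exact dvd_add h1 (dvd_mul_right _ _)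
  have hp0 : (0 : ℤ) < p := by exact_mod_cast hp.pos
  rcases two_mul_dvd_sub_or_add hp hdvd with hb | hb
  · refine ⟨⟨_, hM⟩, ⟨p * k, b, c, rfl, ha, hdisc, dvd_mul_right _ _, ?_⟩,
      (formRel_equivalence _ _).refl _⟩
    exact (ZMod.intCast_eq_intCast_iff_dvd_sub _ _ _).2 (by exact_mod_cast hb)
  · have hc : 0 < c := by
      by_contra! hc
      nlinarith [sq_nonneg b, mul_nonneg ha.le (neg_nonneg.2 hc)]
    have hmem : formMat (c * p) (-b) k ∈ QdNh d p h :=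
      ⟨c * p, -b, k, rfl, mul_pos hc hp0, by linear_combination hdisc, dvd_mul_left _ _,
        (ZMod.intCast_eq_intCast_iff_dvd_sub _ _ _).2 (by
          rw [sub_neg_eq_add]; exact_mod_cast hb)⟩
    exact ⟨⟨_, QdNh_subset_QdN _ _ _ hmem⟩, hmem, frickeInvolution p hp.pos,
      frickeInvolution_mem_FrickeGroup hp.pos, formMat_frickeInvolution hp.pos k b c⟩


/-- **Orbit bijection in the proof of Lemma 4.2.** For `p` prime, `p ∤ d`, and
`h² ≡ -d (mod 4p)`, the inclusion `𝒬_{d,p,h} ⊆ 𝒬_{d,p}` induces a bijection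
`𝒬_{d,p,h}/Γ₀(p) → 𝒬_{d,p}/Γ₀*(p)` preserving the orders of the stabilizers. -/
theorem orbit_bijection_prime_level (p : ℕ) (hp : p.Prime)
    (d : ℤ) (hd : 0 < d) (hpd : ¬ (p : ℤ) ∣ d)
    (h : ℤ) (hh : (h : ZMod (4 * p)) ^ 2 = ((-d : ℤ) : ZMod (4 * p))) :
    ∃ F : Quot (formRel (Gamma0SL2R p) (QdNh d p h)) →
        Quot (formRel (FrickeGroup p) (QdN d p)),
      Function.Bijective F ∧
      (∀ (Q : Matrix (Fin 2) (Fin 2) ℝ) (hQ : Q ∈ QdNh d p h) (hQ' : Q ∈ QdN d p),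
        F (Quot.mk _ ⟨Q, hQ⟩) = Quot.mk _ ⟨Q, hQ'⟩) ∧
      (∀ Q ∈ QdNh d p h, stabOrder (Gamma0SL2R p) Q = stabOrder (FrickeGroup p) Q) := by
  refine ⟨Quot.map (fun Q => ⟨Q.1, QdNh_subset_QdN d p h Q.2⟩) ?_, ⟨?_, ?_⟩, ?_, ?_⟩
  · rintro Q Q' ⟨g, hg, hQ⟩
    exact ⟨g, Gamma0SL2R_le_FrickeGroup p hg, hQ⟩
  · rintro ⟨Q⟩ ⟨Q'⟩ hQQ'
    obtain ⟨g, hg, hgQ⟩ := ((formRel_equivalence _ _).quot_mk_eq_iff _ _).1 hQQ'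
    exact Quot.sound ⟨g, mem_Gamma0SL2R_of_maps_QdNh hp hpd Q.2 Q'.2 hg hgQ, hgQ⟩
  · rintro ⟨Q⟩
    obtain ⟨Q', hQ', hrel⟩ := exists_formRel_mem_QdNh hp hd hh Q
    exact ⟨Quot.mk _ ⟨Q'.1, hQ'⟩, (Quot.sound hrel).symm⟩
  · intro Q hQ hQ'
    rfl
  · intro Q hQ
    unfold stabOrder
    congr 1
    refine Nat.card_congr (Equiv.subtypeEquivRight fun g => ⟨?_, ?_⟩)
    · rintro ⟨hg, hgQ⟩
      exact ⟨Gamma0SL2R_le_FrickeGroup p hg, hgQ⟩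
    · rintro ⟨hg, hgQ⟩
      exact ⟨mem_Gamma0SL2R_of_maps_QdNh hp hpd hQ hQ hg hgQ.symm, hgQ⟩
end
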